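/- arXiv:2411.15308 — 3 statements merged into one kernel-verified Lean document; each statement's English description precedes it below -/
import Mathlib

section
/- Let n ≥ 2 be an integer, 0 < s < 1, 1 ≤ p < ∞, and let u : ℝⁿ → ℝ be a measurable function that is 2π-periodic in the variable x₁ and has finite periodic Gagliardo seminorm [u]^{per}_{W^{s,p}}. Then [u^{*n,1}]^{per}_{W^{s,p}} ≤ [u]^{per}_{W^{s,p}}. -/
open MeasureTheory Real
open scoped ENNReal

/-- For a measurable set `A ⊂ ℝⁿ` of finite Lebesgue measure, the radius of the open ball
centered at the origin with the same measure as `A`. -/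
noncomputable def schwarzRadius (n : ℕ) (A : Set (EuclideanSpace ℝ (Fin n))) : ℝ :=
  ((volume A).toReal / (volume (Metric.ball (0 : EuclideanSpace ℝ (Fin n)) 1)).toReal) ^
    ((n : ℝ)⁻¹)

/-- `A^{*n}`: the open ball in `ℝⁿ` centered at the origin with the same measure as `A`. -/
noncomputable def schwarzSet (n : ℕ) (A : Set (EuclideanSpace ℝ (Fin n))) :
    Set (EuclideanSpace ℝ (Fin n)) :=
  Metric.ball 0 (schwarzRadius n A)

/-- The Schwarz rearrangement `u^{*n}(x) := ∫₀^∞ χ_{{|u|>t}^{*n}}(x) dt`. -/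
noncomputable def schwarzRearr (n : ℕ) (u : EuclideanSpace ℝ (Fin n) → ℝ) :
    EuclideanSpace ℝ (Fin n) → ℝ := fun x =>
  ∫ t in Set.Ioi (0 : ℝ), (schwarzSet n {y | t < |u y|}).indicator (fun _ => (1 : ℝ)) x


/-- `([u]^{per}_{W^{s,p}})^p`, the `p`-th power of the periodic Gagliardo seminorm on
`ℝⁿ = ℝ × ℝ^{n−1}` (so `n = m + 1`), for a function which is `2π`-periodic in the first
variable. -/
noncomputable def gagP (m : ℕ) (s p : ℝ) (u : ℝ × EuclideanSpace ℝ (Fin m) → ℝ) : ℝ≥0∞ :=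
  ∫⁻ x in {x : ℝ × EuclideanSpace ℝ (Fin m) | x.1 ∈ Set.Ioo (-π) π},
    ∫⁻ y : ℝ × EuclideanSpace ℝ (Fin m),
      ENNReal.ofReal (|u x - u y| ^ p /
        Real.sqrt ((x.1 - y.1) ^ 2 + ‖x.2 - y.2‖ ^ 2) ^ ((m : ℝ) + 1 + s * p))

/-- The periodic Gagliardo seminorm `[u]^{per}_{W^{s,p}}`. -/
noncomputable def gagSeminorm (m : ℕ) (s p : ℝ) (u : ℝ × EuclideanSpace ℝ (Fin m) → ℝ) :
    ℝ≥0∞ :=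
  gagP m s p u ^ (1 / p)
/-- The cylindrical rearrangement `u^{*n,1}(x₁,x') := (u(x₁,·))^{*(n−1)}(x')`. -/
noncomputable def cylRearr (m : ℕ) (u : ℝ × EuclideanSpace ℝ (Fin m) → ℝ) :
    ℝ × EuclideanSpace ℝ (Fin m) → ℝ := fun x =>
  schwarzRearr m (fun y => u (x.1, y)) x.2

/-! Slicing in the first variable turns the seminorm into an integral over `x₁, y₁` of energies
`∬ |f x - g y|^p k(|x - y|) dx dy`, where `f` and `g` are slices of `u` and the kernel `k` is
decreasing, so it suffices to rearrange `f` and `g` simultaneously for a fixed `k`.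

Since `w ↦ (w⁺)^p` is a superposition of the functions `w ↦ (w - l)⁺`, each energy is a
superposition of quantities `∬_{x ∈ A, y ∉ B} k(|x - y|) dx dy`, with `A` and `B` superlevel sets
of `f` and `g`. That they decrease when `A` and `B` become centered balls of the same measure is
Riesz' inequality, taken on complements. It is proved for Lipschitz cutoff functions: polarization
in the bisector of `0` and `v` increases the Riesz functional and decreases the second moment, and
by Arzelà–Ascoli there is a pair minimizing the second moment among the pairs which do not lower
the functional; such a pair is not changed by any polarization, hence it is radially decreasing.

Superlevel sets of infinite measure contribute nothing to the rearrangement. When the energy is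
finite, `f` and `g` have the same threshold `c` below which this happens, and `u ↦ (|u| - c)⁺` is
a contraction with the same rearrangement. -/

namespace Rearrangement

open Filter Topology Set Metric
open scoped NNReal

section MeasurePreserving

variable {α ι : Type*} [MeasurableSpace α] {μ : Measure α} [Fintype ι] {T : ι → α → α}
  {f g : α → ℝ≥0∞}

theorem lintegral_sum_comp (hT : ∀ i, MeasurePreserving (T i) μ μ) (hf : Measurable f) :
    ∫⁻ x, ∑ i, f (T i x) ∂μ = Fintype.card ι * ∫⁻ x, f x ∂μ := by
  rw [lintegral_finsetSum (f := fun i x => f (T i x)) _ fun i _ => hf.comp (hT i).measurable]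
  simp only [(hT _).lintegral_comp hf, Finset.sum_const, Finset.card_univ, nsmul_eq_mul]

theorem lintegral_le_lintegral_of_sum_comp_le [Nonempty ι]
    (hT : ∀ i, MeasurePreserving (T i) μ μ) (hf : Measurable f) (hg : Measurable g)
    (hfg : ∀ x, ∑ i, f (T i x) ≤ ∑ i, g (T i x)) : ∫⁻ x, f x ∂μ ≤ ∫⁻ x, g x ∂μ := by
  have hsum := lintegral_mono (μ := μ) hfg
  rw [lintegral_sum_comp hT hf, lintegral_sum_comp hT hg] at hsum
  exact (ENNReal.mul_le_mul_iff_right (by simp) (by simp)).1 hsum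

end MeasurePreserving

section Reflection

variable {E : Type*} [NormedAddCommGroup E] [InnerProductSpace ℝ E]

/-- The reflection in the perpendicular bisector of the segment from `0` to `v`. A point `x` lies
on the side of the origin exactly when `‖x‖ ≤ ‖bisectorReflection v x‖`. -/
noncomputable def bisectorReflection (v : E) : E ≃ᵢ E :=
  (ℝ ∙ v)ᗮ.reflection.toIsometryEquiv.trans (IsometryEquiv.addRight v)

theorem bisectorReflection_apply (v x : E) :
    bisectorReflection v x = x + (1 - 2 * inner ℝ v x / ‖v‖ ^ 2) • v := by
  simp only [bisectorReflection, IsometryEquiv.trans_apply, IsometryEquiv.addRight_apply,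
    LinearIsometryEquiv.coe_toIsometryEquiv, Submodule.reflection_orthogonal_apply,
    Submodule.reflection_singleton_apply, RCLike.ofReal_real_eq_id, id]
  module

theorem bisectorReflection_involutive (v : E) :
    Function.Involutive (bisectorReflection v) := by
  intro x
  rcases eq_or_ne v 0 with rfl | hv
  · simp [bisectorReflection_apply]
  · simp only [bisectorReflection_apply, inner_add_right, real_inner_smul_right,
      real_inner_self_eq_norm_sq]
    match_scalars <;> field_simp
    ring

theorem norm_bisectorReflection_sub (v x y : E) :
    ‖bisectorReflection v x - bisectorReflection v y‖ = ‖x - y‖ := by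
  simpa only [dist_eq_norm] using (bisectorReflection v).dist_eq x y

theorem norm_sub_bisectorReflection_comm (v x y : E) :
    ‖x - bisectorReflection v y‖ = ‖bisectorReflection v x - y‖ := by
  rw [← norm_bisectorReflection_sub v, bisectorReflection_involutive]

theorem norm_sub_bisectorReflection_sq (v x y : E) :
    ‖v‖ ^ 2 * (‖x - bisectorReflection v y‖ ^ 2 - ‖x - y‖ ^ 2) =
      (‖bisectorReflection v x‖ ^ 2 - ‖x‖ ^ 2) * (‖bisectorReflection v y‖ ^ 2 - ‖y‖ ^ 2) := by
  rcases eq_or_ne v 0 with rfl | hv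
  · simp [bisectorReflection_apply]
  · rw [bisectorReflection_apply v x, bisectorReflection_apply v y, ← sub_sub]
    simp only [norm_add_sq_real, norm_sub_sq_real (x - y), inner_sub_left, real_inner_smul_right,
      norm_smul, mul_pow, Real.norm_eq_abs, sq_abs, real_inner_comm v]
    field_simp
    ring

theorem norm_sub_le_norm_sub_bisectorReflection {v x y : E}
    (hx : ‖x‖ ≤ ‖bisectorReflection v x‖) (hy : ‖y‖ ≤ ‖bisectorReflection v y‖) :
    ‖x - y‖ ≤ ‖x - bisectorReflection v y‖ := by
  rcases eq_or_ne v 0 with rfl | hv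
  · simp [bisectorReflection_apply]
  · have hprod := mul_nonneg (sub_nonneg.2 <| pow_le_pow_left₀ (norm_nonneg _) hx 2)
      (sub_nonneg.2 <| pow_le_pow_left₀ (norm_nonneg _) hy 2)
    rw [← norm_sub_bisectorReflection_sq] at hprod
    have hsq := sub_nonneg.1 <| nonneg_of_mul_nonneg_right hprod (by positivity)
    exact le_of_sq_le_sq hsq (norm_nonneg _)

theorem bisectorReflection_eq_self {v x : E} (h : ‖bisectorReflection v x‖ = ‖x‖) :
    bisectorReflection v x = x := by
  rcases eq_or_ne v 0 with rfl | hv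
  · simp [bisectorReflection_apply]
  · have hsq := norm_sub_bisectorReflection_sq v x x
    have hzero : x - bisectorReflection v x = 0 := by simpa [h, hv] using hsq
    exact (sub_eq_zero.1 hzero).symm

theorem exists_bisectorReflection_eq {x y : E} (h : ‖x‖ < ‖y‖) :
    ∃ v : E, bisectorReflection v x = y := by
  have hd : ‖y - x‖ ≠ 0 := norm_sub_eq_zero_iff.not.2 (by rintro rfl; exact h.false)
  have hsq : ‖y‖ ^ 2 - ‖x‖ ^ 2 ≠ 0 :=
    (sub_pos.2 <| pow_lt_pow_left₀ h (norm_nonneg _) two_ne_zero).ne'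
  set t := (‖y‖ ^ 2 - ‖x‖ ^ 2) / ‖y - x‖ ^ 2 with ht
  have hinner : 2 * inner ℝ (y - x) x = ‖y‖ ^ 2 - ‖x‖ ^ 2 - ‖y - x‖ ^ 2 := by
    rw [norm_sub_sq_real, inner_sub_left, real_inner_self_eq_norm_sq]
    ring
  have hcoeff : (1 - 2 * inner ℝ (t • (y - x)) x / ‖t • (y - x)‖ ^ 2) * t = 1 := by
    rw [real_inner_smul_left, norm_smul, mul_pow, Real.norm_eq_abs, sq_abs, mul_left_comm, hinner,
      ht]
    field_simp
    ring
  exact ⟨t • (y - x), by rw [bisectorReflection_apply, smul_smul, hcoeff]; module⟩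

theorem measurePreserving_bisectorReflection [FiniteDimensional ℝ E] [MeasurableSpace E]
    [BorelSpace E] (v : E) : MeasurePreserving (bisectorReflection v) :=
  (measurePreserving_add_right volume v).comp (ℝ ∙ v)ᗮ.reflection.measurePreserving

end Reflection

section Polarization

variable {E : Type*} [NormedAddCommGroup E] [InnerProductSpace ℝ E] {β : Type*} [LinearOrder β]
  {v x : E}

/-- The polarization of `F` with respect to the perpendicular bisector of `0` and `v`: among the
values of `F` at a pair of reflected points, the larger one is moved to the side of the origin. -/
noncomputable def polarize (v : E) (F : E → β) (x : E) : β :=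
  if ‖x‖ ≤ ‖bisectorReflection v x‖ then max (F x) (F (bisectorReflection v x))
  else min (F x) (F (bisectorReflection v x))

theorem polarize_of_norm_le (F : E → β) (hx : ‖x‖ ≤ ‖bisectorReflection v x‖) :
    polarize v F x = max (F x) (F (bisectorReflection v x)) :=
  if_pos hx

theorem polarize_bisectorReflection_of_norm_le (F : E → β)
    (hx : ‖x‖ ≤ ‖bisectorReflection v x‖) :
    polarize v F (bisectorReflection v x) = min (F x) (F (bisectorReflection v x)) := by
  rcases hx.eq_or_lt with heq | hlt
  · have hfix := bisectorReflection_eq_self heq.symm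
    rw [hfix, polarize_of_norm_le F hx, hfix, max_self, min_self]
  · rw [polarize, if_neg, bisectorReflection_involutive, min_comm]
    rwa [bisectorReflection_involutive, not_le]

theorem measurable_polarize [MeasurableSpace E] [BorelSpace E] [TopologicalSpace β]
    [OrderClosedTopology β] [SecondCountableTopology β] [MeasurableSpace β] [BorelSpace β]
    (v : E) {F : E → β} (hF : Measurable F) : Measurable (polarize v F) := by
  have hcomp : Measurable fun x => F (bisectorReflection v x) :=
    hF.comp (bisectorReflection v).continuous.measurable
  have hside : IsClosed {x : E | ‖x‖ ≤ ‖bisectorReflection v x‖} :=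
    isClosed_le continuous_norm (bisectorReflection v).continuous.norm
  exact Measurable.ite hside.measurableSet (hF.max hcomp) (hF.min hcomp)

end Polarization

section Riesz

theorem mul_four_point_le {f f' g g' c d : ℝ≥0} (hcd : c ≤ d) :
    f * g * d + f' * g' * d + f * g' * c + f' * g * c ≤
      max f f' * max g g' * d + min f f' * min g g' * d + max f f' * min g g' * c +
        min f f' * max g g' * c := by
  rcases le_total f f' with hf | hf <;> rcases le_total g g' with hg | hg <;>
    simp only [max_eq_left, max_eq_right, min_eq_left, min_eq_right, hf, hg]
  · exact (by ring : _ = _).le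
  · linarith [mul_add_mul_le_mul_add_mul (mul_add_mul_le_mul_add_mul hf hg) hcd]
  · linarith [mul_add_mul_le_mul_add_mul (mul_add_mul_le_mul_add_mul hf hg) hcd]
  · exact (by ring : _ = _).le

theorem measurable_moment_integrand {E : Type*} [NormedAddCommGroup E]
    [MeasurableSpace E] [BorelSpace E] {F : E → ℝ≥0} (hF : Measurable F) :
    Measurable fun x => ((F x * ‖x‖₊ ^ 2 : ℝ≥0) : ℝ≥0∞) :=
  (hF.mul (measurable_nnnorm.pow_const 2)).coe_nnreal_ennreal

variable {E : Type*} [NormedAddCommGroup E] [InnerProductSpace ℝ E]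

theorem sum_riesz_le_polarize {k : ℝ≥0 → ℝ≥0} (hk : Antitone k) (v : E) (F G : E → ℝ≥0)
    (x y : E) :
    let σ := bisectorReflection v
    F x * G y * k ‖x - y‖₊ + F (σ x) * G (σ y) * k ‖σ x - σ y‖₊ +
        F x * G (σ y) * k ‖x - σ y‖₊ + F (σ x) * G y * k ‖σ x - y‖₊ ≤
      polarize v F x * polarize v G y * k ‖x - y‖₊ +
        polarize v F (σ x) * polarize v G (σ y) * k ‖σ x - σ y‖₊ +
        polarize v F x * polarize v G (σ y) * k ‖x - σ y‖₊ +
        polarize v F (σ x) * polarize v G y * k ‖σ x - y‖₊ := by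
  intro σ
  wlog hx : ‖x‖ ≤ ‖σ x‖ generalizing x
  · have hσx := this (σ x) (by rw [bisectorReflection_involutive]; exact (not_le.1 hx).le)
    simp only [σ, bisectorReflection_involutive v x] at hσx ⊢
    linarith
  wlog hy : ‖y‖ ≤ ‖σ y‖ generalizing y
  · have hσy := this (σ y) (by rw [bisectorReflection_involutive]; exact (not_le.1 hy).le)
    simp only [σ, bisectorReflection_involutive v y] at hσy ⊢
    linarith
  have hσσ : ‖σ x - σ y‖₊ = ‖x - y‖₊ := NNReal.eq (norm_bisectorReflection_sub v x y)
  have hσ : ‖σ x - y‖₊ = ‖x - σ y‖₊ := NNReal.eq (norm_sub_bisectorReflection_comm v x y).symm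
  simp only [hσσ, hσ, σ, polarize_of_norm_le _ hx, polarize_of_norm_le _ hy,
    polarize_bisectorReflection_of_norm_le _ hx, polarize_bisectorReflection_of_norm_le _ hy]
  exact mul_four_point_le (hk (norm_sub_le_norm_sub_bisectorReflection hx hy))

theorem add_moment_polarize_le (v : E) (F : E → ℝ≥0) (x : E) :
    polarize v F x * ‖x‖₊ ^ 2 +
        polarize v F (bisectorReflection v x) * ‖bisectorReflection v x‖₊ ^ 2 ≤
      F x * ‖x‖₊ ^ 2 + F (bisectorReflection v x) * ‖bisectorReflection v x‖₊ ^ 2 := by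
  wlog hx : ‖x‖ ≤ ‖bisectorReflection v x‖ generalizing x
  · have hσx := this (bisectorReflection v x)
      (by rw [bisectorReflection_involutive]; exact (not_le.1 hx).le)
    simp only [bisectorReflection_involutive v x] at hσx
    linarith
  have hsq : ‖x‖₊ ^ 2 ≤ ‖bisectorReflection v x‖₊ ^ 2 := pow_le_pow_left₀ (a := ‖x‖₊) zero_le hx 2
  simp only [polarize_of_norm_le _ hx, polarize_bisectorReflection_of_norm_le _ hx]
  rcases le_total (F x) (F (bisectorReflection v x)) with hF | hF
  · rw [max_eq_right hF, min_eq_left hF]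
    linarith [mul_add_mul_le_mul_add_mul hF hsq]
  · rw [max_eq_left hF, min_eq_right hF]

theorem add_moment_polarize_lt {v : E} {F : E → ℝ≥0} {x : E}
    (hx : ‖x‖ < ‖bisectorReflection v x‖) (hF : F x < F (bisectorReflection v x)) :
    polarize v F x * ‖x‖₊ ^ 2 +
        polarize v F (bisectorReflection v x) * ‖bisectorReflection v x‖₊ ^ 2 <
      F x * ‖x‖₊ ^ 2 + F (bisectorReflection v x) * ‖bisectorReflection v x‖₊ ^ 2 := by
  have hsq : ‖x‖₊ ^ 2 < ‖bisectorReflection v x‖₊ ^ 2 :=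
    pow_lt_pow_left₀ (a := ‖x‖₊) hx zero_le two_ne_zero
  rw [polarize_of_norm_le _ hx.le, polarize_bisectorReflection_of_norm_le _ hx.le,
    max_eq_right hF.le, min_eq_left hF.le]
  linarith [mul_add_mul_lt_mul_add_mul hF hsq]

variable [FiniteDimensional ℝ E] [MeasurableSpace E] [BorelSpace E]

/-- The Riesz functional `∬ F(x) G(y) k(|x - y|) dx dy` of the radial kernel `k`. -/
noncomputable def rieszFunctional (k : ℝ≥0 → ℝ≥0) (F G : E → ℝ≥0) : ℝ≥0∞ :=
  ∫⁻ z : E × E, ↑(F z.1 * G z.2 * k ‖z.1 - z.2‖₊)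

/-- The second moment of `F`, which polarization can only decrease. -/
noncomputable def moment (F : E → ℝ≥0) : ℝ≥0∞ :=
  ∫⁻ x, ↑(F x * ‖x‖₊ ^ 2)

theorem measurable_riesz_integrand {k : ℝ≥0 → ℝ≥0} (hk : Antitone k) {F G : E → ℝ≥0}
    (hF : Measurable F) (hG : Measurable G) :
    Measurable fun z : E × E => ((F z.1 * G z.2 * k ‖z.1 - z.2‖₊ : ℝ≥0) : ℝ≥0∞) :=
  (((hF.comp measurable_fst).mul (hG.comp measurable_snd)).mul
    (hk.measurable.comp (measurable_fst.sub measurable_snd).nnnorm)).coe_nnreal_ennreal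

theorem measurePreserving_cond_bisectorReflection (v : E) (b : Bool) :
    MeasurePreserving fun x => bif b then bisectorReflection v x else x := by
  cases b
  exacts [MeasurePreserving.id _, measurePreserving_bisectorReflection v]

theorem rieszFunctional_le_polarize {k : ℝ≥0 → ℝ≥0} (hk : Antitone k) (v : E) {F G : E → ℝ≥0}
    (hF : Measurable F) (hG : Measurable G) :
    rieszFunctional k F G ≤ rieszFunctional k (polarize v F) (polarize v G) := by
  refine lintegral_le_lintegral_of_sum_comp_le (ι := Bool × Bool)
    (fun b => (measurePreserving_cond_bisectorReflection v b.1).prod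
      (measurePreserving_cond_bisectorReflection v b.2))
    (measurable_riesz_integrand hk hF hG)
    (measurable_riesz_integrand hk (measurable_polarize v hF) (measurable_polarize v hG)) ?_
  rintro ⟨x, y⟩
  simp only [Fintype.sum_prod_type, Fintype.sum_bool, Prod.map_apply, cond_true, cond_false]
  have hsum := sum_riesz_le_polarize hk v F G x y
  norm_cast
  linarith

theorem moment_polarize_le (v : E) {F : E → ℝ≥0} (hF : Measurable F) :
    moment (polarize v F) ≤ moment F := by
  refine lintegral_le_lintegral_of_sum_comp_le (measurePreserving_cond_bisectorReflection v)
    (measurable_moment_integrand (measurable_polarize v hF)) (measurable_moment_integrand hF)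
    fun x => ?_
  simp only [Fintype.sum_bool, cond_true, cond_false]
  have hsum := add_moment_polarize_le v F x
  norm_cast
  linarith

theorem moment_polarize_lt {v : E} {F : E → ℝ≥0} (hF : Continuous F) (hfin : moment F ≠ ⊤)
    {x : E} (hx : ‖x‖ < ‖bisectorReflection v x‖) (hFx : F x < F (bisectorReflection v x)) :
    moment (polarize v F) < moment F := by
  have hT := measurePreserving_cond_bisectorReflection v
  have hmP := measurable_moment_integrand (measurable_polarize v hF.measurable)
  have hmF := measurable_moment_integrand hF.measurable
  have hσ := (bisectorReflection v).continuous
  set U := {y : E | ‖y‖ < ‖bisectorReflection v y‖ ∧ F y < F (bisectorReflection v y)}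
  have hU : IsOpen U := by
    have hFσ := isOpen_lt hF (hF.comp hσ)
    exact (isOpen_lt continuous_norm hσ.norm).inter hFσ
  suffices 2 * moment (polarize v F) < 2 * moment F from lt_of_mul_lt_mul_left' this
  have hfin' : 2 * moment (polarize v F) ≠ ⊤ :=
    ENNReal.mul_ne_top (by simp) (ne_top_of_le_ne_top hfin (moment_polarize_le v hF.measurable))
  have hdouble := fun {f : E → ℝ≥0∞} (hf : Measurable f) => lintegral_sum_comp hT hf
  simp only [Fintype.sum_bool, cond_true, cond_false, Fintype.card_bool, Nat.cast_ofNat]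
    at hdouble
  rw [moment, ← hdouble hmP] at hfin' ⊢
  rw [moment, ← hdouble hmF]
  refine lintegral_strict_mono_of_ae_le_of_ae_lt_on
    ((hmF.comp hσ.measurable).add hmF).aemeasurable hfin' (.of_forall fun y => ?_)
    (hU.measure_pos volume ⟨x, hx, hFx⟩).ne' (.of_forall fun y hy => ?_)
  · have hsum := add_moment_polarize_le v F y
    beta_reduce
    norm_cast
    linarith
  · have hsum := add_moment_polarize_lt hy.1 hy.2
    norm_cast
    linarith

end Riesz

section LipschitzCutoff

theorem lipschitzWith_iff_le_add_nndist {X : Type*} [PseudoMetricSpace X] {L : ℝ≥0}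
    {f : X → ℝ≥0} : LipschitzWith L f ↔ ∀ x y, f x ≤ f y + L * nndist x y := by
  simp only [lipschitzWith_iff_dist_le_mul, NNReal.dist_eq, abs_sub_le_iff, sub_le_iff_le_add',
    ← NNReal.coe_le_coe, NNReal.coe_add, NNReal.coe_mul, coe_nndist]
  exact ⟨fun h x y => (h x y).1, fun h x y => ⟨h x y, dist_comm x y ▸ h y x⟩⟩

theorem exists_subseq_tendsto_of_lipschitzWith {X Y : Type*} [PseudoMetricSpace X] [ProperSpace X]
    [MetricSpace Y] {K : Set Y} (hK : IsCompact K) {L : ℝ≥0} {f : ℕ → X → Y}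
    (hf : ∀ n, LipschitzWith L (f n)) (hfK : ∀ n x, f n x ∈ K) :
    ∃ g : X → Y, LipschitzWith L g ∧ ∃ φ : ℕ → ℕ, StrictMono φ ∧
      Tendsto (fun n => f (φ n)) atTop (𝓝 g) := by
  let S : Set C(X, Y) := {h | LipschitzWith L h ∧ ∀ x, h x ∈ K}
  have himage : ContinuousMap.toFun '' S = {h | LipschitzWith L h} ∩ univ.pi fun _ => K := by
    ext h
    simp only [mem_image, mem_inter_iff, mem_univ_pi, mem_ofPred_eq]
    exact ⟨fun ⟨_, hg, hgh⟩ => hgh ▸ hg, fun h' => ⟨⟨h, h'.1.continuous⟩, h', rfl⟩⟩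
  have hS : IsCompact S := by
    refine ArzelaAscoli.isCompact_of_equicontinuous S ?_
      (LipschitzWith.uniformEquicontinuous _ L fun h => h.2.1).equicontinuous
    rw [himage]
    exact (isCompact_univ_pi fun _ => hK).inter_left (isClosed_setOfPred_lipschitzWith L)
  obtain ⟨g, hg, φ, hφ, hlim⟩ := hS.isSeqCompact (x := fun n => ⟨f n, (hf n).continuous⟩)
    fun n => ⟨hf n, hfK n⟩
  exact ⟨g, hg.1, φ, hφ, tendsto_pi_nhds.2 fun x => ((continuous_eval_const x).tendsto g).comp hlim⟩

theorem measure_support_le_of_tendsto {X : Type*} [MeasurableSpace X] {μ : Measure X}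
    {f : ℕ → X → ℝ≥0} {g : X → ℝ≥0} (hfg : Tendsto f atTop (𝓝 g)) {a : ℝ≥0∞}
    (hf : ∀ n, μ (Function.support (f n)) ≤ a) : μ (Function.support g) ≤ a := by
  have hsubset : Function.support g ⊆ ⋃ N, ⋂ n ∈ Ici N, Function.support (f n) := by
    intro x hx
    have hev := (tendsto_pi_nhds.1 hfg x).eventually_ne hx
    simpa [Function.mem_support] using eventually_atTop.1 hev
  have hmono : Monotone fun N => ⋂ n ∈ Ici N, Function.support (f n) := fun N M h =>
    biInter_subset_biInter_left (Ici_subset_Ici.2 h)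
  calc μ (Function.support g) ≤ μ (⋃ N, ⋂ n ∈ Ici N, Function.support (f n)) := measure_mono hsubset
    _ = ⨆ N, μ (⋂ n ∈ Ici N, Function.support (f n)) := hmono.measure_iUnion
    _ ≤ a := iSup_le fun N =>
      (measure_mono (biInter_subset_of_mem self_mem_Ici)).trans (hf N)

variable {E : Type*} [NormedAddCommGroup E] [InnerProductSpace ℝ E]

theorem lipschitzWith_polarize {L : ℝ≥0} {F : E → ℝ≥0} (hF : LipschitzWith L F) (v : E) :
    LipschitzWith L (polarize v F) := by
  refine lipschitzWith_iff_le_add_nndist.2 fun x y => ?_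
  have hle : ∀ a b : E, ‖a - b‖ ≤ ‖x - y‖ → F a ≤ F b + L * nndist x y := by
    intro a b hab
    have hab : nndist a b ≤ nndist x y := by
      simpa only [← NNReal.coe_le_coe, coe_nndist, dist_eq_norm] using hab
    grw [← hab]
    exact lipschitzWith_iff_le_add_nndist.1 hF a b
  have hopposite (hx : ‖x‖ ≤ ‖bisectorReflection v x‖) (hy : ‖bisectorReflection v y‖ ≤ ‖y‖) :
      ‖x - bisectorReflection v y‖ ≤ ‖x - y‖ := by
    have hσy := norm_sub_le_norm_sub_bisectorReflection (y := bisectorReflection v y) hx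
    simpa only [bisectorReflection_involutive v y, hy, forall_const] using hσy
  have h₁ := hle x y le_rfl
  have h₂ := hle _ _ (norm_bisectorReflection_sub v x y).le
  rw [polarize, polarize]
  split_ifs with hx hy hy
  · grind
  · have hσ := hopposite hx (not_le.1 hy).le
    have h₃ := hle _ _ hσ
    have h₄ := hle _ _ ((norm_sub_bisectorReflection_comm v x y).ge.trans hσ)
    grind
  · grind
  · grind

theorem polarize_le_indicator_closedBall {R : ℝ} {F : E → ℝ≥0}
    (hF : F ≤ (closedBall 0 R).indicator 1) (v : E) :
    polarize v F ≤ (closedBall 0 R).indicator 1 := by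
  intro x
  rw [polarize]
  split_ifs with hσ
  · classical
    refine max_le (hF x) ((hF _).trans ?_)
    simp only [indicator_apply, mem_closedBall_zero_iff, Pi.one_apply]
    split_ifs with h h'
    exacts [le_rfl, absurd (hσ.trans h) h', zero_le, le_rfl]
  · exact (min_le_left _ _).trans (hF x)

variable [FiniteDimensional ℝ E] [MeasurableSpace E] [BorelSpace E]

theorem volume_support_polarize_le (v : E) {F : E → ℝ≥0} (hF : Measurable F) :
    volume (Function.support (polarize v F)) ≤ volume (Function.support F) := by
  have hmP := measurableSet_support (measurable_polarize v hF)
  have hmF := measurableSet_support hF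
  rw [← lintegral_indicator_one hmP, ← lintegral_indicator_one hmF]
  refine lintegral_le_lintegral_of_sum_comp_le (measurePreserving_cond_bisectorReflection v)
    (measurable_one.indicator hmP) (measurable_one.indicator hmF) fun x => ?_
  classical
  simp only [Fintype.sum_bool, cond_true, cond_false]
  wlog hx : ‖x‖ ≤ ‖bisectorReflection v x‖ generalizing x
  · have hσx := this (bisectorReflection v x)
      (by rw [bisectorReflection_involutive]; exact (not_le.1 hx).le)
    simpa only [bisectorReflection_involutive v x, add_comm] using hσx
  simp only [indicator_apply, Function.mem_support, Pi.one_apply, polarize_of_norm_le _ hx,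
    polarize_bisectorReflection_of_norm_le _ hx]
  rcases le_total (F x) (F (bisectorReflection v x)) with h | h
  · rw [max_eq_right h, min_eq_left h, add_comm]
  · rw [max_eq_left h, min_eq_right h]

/-- The compact class in which the second moment is minimised: Lipschitz functions with values in
`[0, 1]`, vanishing outside the ball of radius `R`, and positive on a set of measure at most
`a`. -/
structure IsLipschitzCutoff (L : ℝ≥0) (R : ℝ) (a : ℝ≥0∞) (F : E → ℝ≥0) : Prop where
  lipschitz : LipschitzWith L F
  le_indicator : F ≤ (closedBall 0 R).indicator 1
  volume_support_le : volume (Function.support F) ≤ a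

variable {L : ℝ≥0} {R : ℝ} {a b : ℝ≥0∞} {F G : E → ℝ≥0}

namespace IsLipschitzCutoff

protected theorem continuous (hF : IsLipschitzCutoff L R a F) : Continuous F :=
  hF.lipschitz.continuous

theorem le_one (hF : IsLipschitzCutoff L R a F) (x : E) : F x ≤ 1 :=
  (hF.le_indicator x).trans (indicator_le_self' (by simp) x)

protected theorem polarize (hF : IsLipschitzCutoff L R a F) (v : E) :
    IsLipschitzCutoff L R a (polarize v F) where
  lipschitz := lipschitzWith_polarize hF.lipschitz v
  le_indicator := polarize_le_indicator_closedBall hF.le_indicator v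
  volume_support_le :=
    (volume_support_polarize_le v hF.continuous.measurable).trans hF.volume_support_le

theorem exists_subseq_tendsto {f : ℕ → E → ℝ≥0} (hf : ∀ n, IsLipschitzCutoff L R a (f n)) :
    ∃ F, IsLipschitzCutoff L R a F ∧ ∃ φ : ℕ → ℕ, StrictMono φ ∧
      Tendsto (fun n => f (φ n)) atTop (𝓝 F) := by
  obtain ⟨F, hF, φ, hφ, hlim⟩ := exists_subseq_tendsto_of_lipschitzWith
    (isCompact_Icc (a := (0 : ℝ≥0)) (b := 1)) (fun n => (hf n).lipschitz)
    fun n x => ⟨zero_le, (hf n).le_one x⟩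
  refine ⟨F, ⟨hF, ?_, ?_⟩, φ, hφ, hlim⟩
  · exact le_of_tendsto' hlim fun n => (hf (φ n)).le_indicator
  · exact measure_support_le_of_tendsto hlim fun n => (hf (φ n)).volume_support_le

end IsLipschitzCutoff

end LipschitzCutoff

section MinimalMoment

variable {E : Type*} [NormedAddCommGroup E] [InnerProductSpace ℝ E] [FiniteDimensional ℝ E]
  [MeasurableSpace E] [BorelSpace E] {k : ℝ≥0 → ℝ≥0} {L L' : ℝ≥0} {R R' : ℝ} {a b : ℝ≥0∞}
  {F G : E → ℝ≥0}

/-- `F` is radially non-increasing, with no condition on its values on a single sphere. -/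
def NormAntitone (F : E → ℝ≥0) : Prop :=
  ∀ ⦃x y⦄, ‖x‖ < ‖y‖ → F y ≤ F x

namespace IsLipschitzCutoff

theorem mul_nnnorm_sq_le (hF : IsLipschitzCutoff L R a F) (x : E) :
    ((F x * ‖x‖₊ ^ 2 : ℝ≥0) : ℝ≥0∞) ≤
      (closedBall 0 R).indicator (fun _ => (R.toNNReal : ℝ≥0∞) ^ 2) x := by
  by_cases hx : x ∈ closedBall 0 R
  · have hnorm : ‖x‖₊ ≤ R.toNNReal := NNReal.le_toNNReal_of_coe_le (by simpa using hx)
    rw [indicator_of_mem hx]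
    norm_cast
    grw [hF.le_one x, one_mul, hnorm]
  · have hFx : F x ≤ 0 := by simpa [hx] using hF.le_indicator x
    simp [nonpos_iff_eq_zero.1 hFx]

theorem lintegral_moment_bound_ne_top :
    ∫⁻ x : E, (closedBall 0 R).indicator (fun _ => (R.toNNReal : ℝ≥0∞) ^ 2) x ≠ ⊤ := by
  rw [lintegral_indicator_const measurableSet_closedBall]
  exact ENNReal.mul_ne_top (by simp) measure_closedBall_lt_top.ne

theorem moment_ne_top (hF : IsLipschitzCutoff L R a F) : moment F ≠ ⊤ :=
  ne_top_of_le_ne_top lintegral_moment_bound_ne_top (lintegral_mono hF.mul_nnnorm_sq_le)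

theorem tendsto_moment {f : ℕ → E → ℝ≥0} (hf : ∀ n, IsLipschitzCutoff L R a (f n))
    (hlim : Tendsto f atTop (𝓝 F)) : Tendsto (fun n => moment (f n)) atTop (𝓝 (moment F)) := by
  refine tendsto_lintegral_of_dominated_convergence _
    (fun n => measurable_moment_integrand (hf n).continuous.measurable)
    (fun n => .of_forall (hf n).mul_nnnorm_sq_le) lintegral_moment_bound_ne_top
    (.of_forall fun x => ENNReal.tendsto_coe.2 ?_)
  exact (tendsto_pi_nhds.1 hlim x).mul_const _

theorem mul_mul_le (hk : Antitone k) (hF : IsLipschitzCutoff L R a F)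
    (hG : IsLipschitzCutoff L' R' b G) (z : E × E) :
    ((F z.1 * G z.2 * k ‖z.1 - z.2‖₊ : ℝ≥0) : ℝ≥0∞) ≤
      (closedBall (0 : E) R ×ˢ closedBall (0 : E) R').indicator (fun _ => (k 0 : ℝ≥0∞)) z := by
  by_cases hz : z ∈ closedBall (0 : E) R ×ˢ closedBall (0 : E) R'
  · rw [indicator_of_mem hz]
    norm_cast
    grw [hF.le_one, hG.le_one, hk zero_le, one_mul, one_mul]
  · have hF₁ := hF.le_indicator z.1
    have hG₂ := hG.le_indicator z.2
    rw [mem_prod, not_and_or] at hz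
    rcases hz with hz | hz
    · rw [indicator_of_notMem hz, nonpos_iff_eq_zero] at hF₁
      simp [hF₁]
    · rw [indicator_of_notMem hz, nonpos_iff_eq_zero] at hG₂
      simp [hG₂]

theorem tendsto_rieszFunctional (hk : Antitone k) {f g : ℕ → E → ℝ≥0}
    (hf : ∀ n, IsLipschitzCutoff L R a (f n)) (hg : ∀ n, IsLipschitzCutoff L' R' b (g n))
    (hF : Tendsto f atTop (𝓝 F)) (hG : Tendsto g atTop (𝓝 G)) :
    Tendsto (fun n => rieszFunctional k (f n) (g n)) atTop (𝓝 (rieszFunctional k F G)) := by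
  refine tendsto_lintegral_of_dominated_convergence _
    (fun n => measurable_riesz_integrand hk (hf n).continuous.measurable
      (hg n).continuous.measurable)
    (fun n => .of_forall ((hf n).mul_mul_le hk (hg n))) ?_
    (.of_forall fun z => ENNReal.tendsto_coe.2 ?_)
  · rw [lintegral_indicator_const (measurableSet_closedBall.prod measurableSet_closedBall),
      Measure.volume_eq_prod, Measure.prod_prod]
    have hball (r : ℝ) := (measure_closedBall_lt_top (μ := volume) (x := (0 : E)) (r := r)).ne
    exact ENNReal.mul_ne_top ENNReal.coe_ne_top (ENNReal.mul_ne_top (hball R) (hball R'))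
  · exact ((tendsto_pi_nhds.1 hF z.1).mul (tendsto_pi_nhds.1 hG z.2)).mul_const _

end IsLipschitzCutoff

theorem exists_minimal_moment (hk : Antitone k) (hF : IsLipschitzCutoff L R a F)
    (hG : IsLipschitzCutoff L' R' b G) :
    ∃ F₁ G₁ : E → ℝ≥0, IsLipschitzCutoff L R a F₁ ∧ IsLipschitzCutoff L' R' b G₁ ∧
      rieszFunctional k F G ≤ rieszFunctional k F₁ G₁ ∧
      ∀ F₂ G₂ : E → ℝ≥0, IsLipschitzCutoff L R a F₂ → IsLipschitzCutoff L' R' b G₂ →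
        rieszFunctional k F G ≤ rieszFunctional k F₂ G₂ →
        moment F₁ + moment G₁ ≤ moment F₂ + moment G₂ := by
  let S : Set ℝ≥0∞ := {c | ∃ F₁ G₁ : E → ℝ≥0,
    IsLipschitzCutoff L R a F₁ ∧ IsLipschitzCutoff L' R' b G₁ ∧
    rieszFunctional k F G ≤ rieszFunctional k F₁ G₁ ∧ moment F₁ + moment G₁ = c}
  obtain ⟨c, -, hcS, hc⟩ := exists_seq_tendsto_sInf (S := S) ⟨_, F, G, hF, hG, le_rfl, rfl⟩
    (OrderBot.bddBelow S)
  choose f g hf hg hfg hmoment using hc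
  obtain ⟨F₁, hF₁, φ, hφ, hflim⟩ := IsLipschitzCutoff.exists_subseq_tendsto hf
  obtain ⟨G₁, hG₁, ψ, hψ, hglim⟩ :=
    IsLipschitzCutoff.exists_subseq_tendsto fun n => hg (φ n)
  have hflim' := hflim.comp hψ.tendsto_atTop
  have hmin : moment F₁ + moment G₁ = sInf S := by
    refine tendsto_nhds_unique
      ((IsLipschitzCutoff.tendsto_moment (fun n => hf (φ (ψ n))) hflim').add
        (IsLipschitzCutoff.tendsto_moment (fun n => hg (φ (ψ n))) hglim)) ?_
    simp only [hmoment]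
    exact hcS.comp (hφ.comp hψ).tendsto_atTop
  refine ⟨F₁, G₁, hF₁, hG₁, ?_, fun F₂ G₂ hF₂ hG₂ hle => ?_⟩
  · exact ge_of_tendsto' (IsLipschitzCutoff.tendsto_rieszFunctional hk (fun n => hf (φ (ψ n)))
      (fun n => hg (φ (ψ n))) hflim' hglim) fun n => hfg (φ (ψ n))
  · exact hmin.trans_le (sInf_le ⟨F₂, G₂, hF₂, hG₂, hle, rfl⟩)

theorem normAntitone_of_forall_moment_le_polarize (hF : Continuous F) (hfin : moment F ≠ ⊤)
    (h : ∀ v, moment F ≤ moment (polarize v F)) : NormAntitone F := by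
  intro x y hxy
  by_contra! hlt
  obtain ⟨v, rfl⟩ := exists_bisectorReflection_eq hxy
  exact (h v).not_gt (moment_polarize_lt hF hfin hxy hlt)

theorem exists_normAntitone_rieszFunctional_ge (hk : Antitone k)
    (hF : IsLipschitzCutoff L R a F) (hG : IsLipschitzCutoff L' R' b G) :
    ∃ F₁ G₁ : E → ℝ≥0, (IsLipschitzCutoff L R a F₁ ∧ NormAntitone F₁) ∧
      (IsLipschitzCutoff L' R' b G₁ ∧ NormAntitone G₁) ∧
      rieszFunctional k F G ≤ rieszFunctional k F₁ G₁ := by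
  obtain ⟨F₁, G₁, hF₁, hG₁, hle, hmin⟩ := exists_minimal_moment hk hF hG
  have hF₁m := hF₁.continuous.measurable
  have hG₁m := hG₁.continuous.measurable
  have hpol (v : E) : moment F₁ + moment G₁ ≤ moment (polarize v F₁) + moment (polarize v G₁) :=
    hmin _ _ (hF₁.polarize v) (hG₁.polarize v)
      (hle.trans (rieszFunctional_le_polarize hk v hF₁m hG₁m))
  refine ⟨F₁, G₁, ⟨hF₁, ?_⟩, ⟨hG₁, ?_⟩, hle⟩
  · refine normAntitone_of_forall_moment_le_polarize hF₁.continuous hF₁.moment_ne_top fun v => ?_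
    refine ENNReal.le_of_add_le_add_right hG₁.moment_ne_top ((hpol v).trans ?_)
    gcongr
    exact moment_polarize_le v hG₁m
  · refine normAntitone_of_forall_moment_le_polarize hG₁.continuous hG₁.moment_ne_top fun v => ?_
    refine ENNReal.le_of_add_le_add_left hF₁.moment_ne_top ((hpol v).trans ?_)
    gcongr
    exact moment_polarize_le v hF₁m

end MinimalMoment

theorem exists_monotone_isCompact_iUnion_eq {X : Type*} [PseudoEMetricSpace X]
    [SigmaCompactSpace X] {U : Set X} (hU : IsOpen U) :
    ∃ K : ℕ → Set X, Monotone K ∧ (∀ n, IsCompact (K n)) ∧ ⋃ n, K n = U := by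
  obtain ⟨F, hF, -, hFU, hFmono⟩ := hU.exists_iUnion_isClosed
  have hcover : Monotone (compactCovering X) := fun _ _ hmn => compactCovering_subset X hmn
  refine ⟨fun n => F n ∩ compactCovering X n, fun i j hij => ?_, fun n => ?_, ?_⟩
  · exact inter_subset_inter (hFmono hij) (hcover hij)
  · exact (isCompact_compactCovering X n).inter_left (hF n)
  · rw [iUnion_inter_of_monotone hFmono hcover, hFU, iUnion_compactCovering, inter_univ]

section Interaction

variable {E : Type*} [NormedAddCommGroup E] [InnerProductSpace ℝ E] [FiniteDimensional ℝ E]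
  [MeasurableSpace E] [BorelSpace E] {k : ℝ≥0 → ℝ≥0} {A B K L U V : Set E} {r s : ℝ}

/-- The measure on pairs with density `k ‖x - y‖`. The interaction of two sets `A` and `B` is
`interaction k (A ×ˢ B)`, which is the Riesz functional of their indicators. -/
noncomputable def interaction (k : ℝ≥0 → ℝ≥0) : Measure (E × E) :=
  volume.withDensity fun z => (k ‖z.1 - z.2‖₊ : ℝ≥0∞)

instance : SFinite (interaction k : Measure (E × E)) := by
  unfold interaction
  infer_instance

theorem measurable_kernel (hk : Antitone k) :
    Measurable fun z : E × E => (k ‖z.1 - z.2‖₊ : ℝ≥0∞) := by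
  have hkm := hk.measurable
  fun_prop

theorem interaction_prod_eq_lintegral (hk : Antitone k) (A B : Set E) :
    interaction k (A ×ˢ B) = ∫⁻ x in A, ∫⁻ y in B, (k ‖x - y‖₊ : ℝ≥0∞) := by
  rw [interaction, withDensity_apply', Measure.volume_eq_prod, ← Measure.prod_restrict,
    lintegral_prod _ (measurable_kernel hk).aemeasurable]

theorem interaction_prod_univ (hk : Antitone k) (A : Set E) :
    interaction k (A ×ˢ univ) = (∫⁻ z : E, (k ‖z‖₊ : ℝ≥0∞)) * volume A := by
  simp only [interaction_prod_eq_lintegral hk, Measure.restrict_univ,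
    lintegral_sub_left_eq_self (fun z : E => (k ‖z‖₊ : ℝ≥0∞)), setLIntegral_const]

theorem interaction_prod_add_compl (hk : Antitone k) (A : Set E) (hB : MeasurableSet B) :
    interaction k (A ×ˢ B) + interaction k (A ×ˢ Bᶜ) =
      (∫⁻ z : E, (k ‖z‖₊ : ℝ≥0∞)) * volume A := by
  have hsplit := measure_inter_add_sdiff (μ := interaction k) (A ×ˢ univ)
    (measurable_snd hB)
  rw [← interaction_prod_univ hk, ← hsplit]
  congr 2 <;> ext <;> simp

theorem measurePreserving_swap_interaction (hk : Antitone k) :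
    MeasurePreserving Prod.swap (interaction k : Measure (E × E)) (interaction k) := by
  refine ⟨measurable_swap, Measure.ext fun S hS => ?_⟩
  rw [Measure.map_apply measurable_swap hS, interaction, withDensity_apply', withDensity_apply',
    Measure.volume_eq_prod,
    ← Measure.measurePreserving_swap.setLIntegral_comp_preimage hS (measurable_kernel hk)]
  simp only [Prod.fst_swap, Prod.snd_swap, ← nndist_eq_nnnorm, nndist_comm]

theorem interaction_prod_congr (hA : A =ᵐ[volume] K) (hB : B =ᵐ[volume] L) :
    interaction k (A ×ˢ B) = interaction k (K ×ˢ L) :=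
  measure_congr <| (withDensity_absolutelyContinuous _ _).ae_eq (Measure.set_prod_ae_eq hA hB)

theorem interaction_prod_ne_top (hk : Antitone k) (hA : volume A ≠ ⊤) (hB : volume B ≠ ⊤) :
    interaction k (A ×ˢ B) ≠ ⊤ := by
  rw [interaction_prod_eq_lintegral hk]
  refine ne_top_of_le_ne_top (b := k 0 * volume B * volume A) (by finiteness) ?_
  grw [lintegral_mono fun x => lintegral_mono fun y => ENNReal.coe_le_coe.2 (hk zero_le)]
  simp only [setLIntegral_const, le_refl]

theorem interaction_eq_rieszFunctional (hA : MeasurableSet A) (hB : MeasurableSet B) :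
    interaction k (A ×ˢ B) = rieszFunctional k (A.indicator 1) (B.indicator 1) := by
  classical
  rw [interaction, withDensity_apply', ← lintegral_indicator (hA.prod hB), rieszFunctional]
  congr with z
  simp only [indicator_apply, mem_prod, Pi.one_apply]
  split_ifs <;> simp_all

theorem rieszFunctional_mono {F F' G G' : E → ℝ≥0} (hF : F ≤ F') (hG : G ≤ G') :
    rieszFunctional k F G ≤ rieszFunctional k F' G' := by
  refine lintegral_mono fun z => ENNReal.coe_le_coe.2 ?_
  gcongr
  exacts [hF z.1, hG z.2]

theorem exists_isLipschitzCutoff_between (hK : IsCompact K) (hU : IsOpen U) (hKU : K ⊆ U) :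
    ∃ (L : ℝ≥0) (R : ℝ) (F : E → ℝ≥0), IsLipschitzCutoff L R (volume U) F ∧
      K.indicator 1 ≤ F := by
  obtain ⟨δ, hδ, hsub⟩ := hK.exists_thickening_subset_open hU hKU
  obtain ⟨R, hR⟩ := (hK.isBounded.thickening (δ := δ)).subset_closedBall 0
  have hzero (x : E) (hx : x ∉ thickening δ K) : thickenedIndicator hδ K x = 0 :=
    thickenedIndicator_zero hδ K hx
  refine ⟨δ.toNNReal⁻¹, R, thickenedIndicator hδ K, ⟨lipschitzWith_thickenedIndicator hδ K,
    fun x => ?_, measure_mono fun x hx => hsub ?_⟩, fun x => ?_⟩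
  · refine le_indicator (fun x _ => thickenedIndicator_le_one hδ K x) (fun x hx => ?_) x
    exact (hzero x fun hx' => hx (hR hx')).le
  · by_contra hx'
    exact hx (hzero x hx')
  · refine indicator_le' (fun x hx => ?_) (fun x _ => zero_le) x
    exact (thickenedIndicator_one hδ K hx).ge

theorem tendsto_interaction_closedBall (hk : Antitone k) (r s : ℝ) :
    Tendsto (fun ε => interaction k (closedBall (0 : E) (r + ε) ×ˢ closedBall (0 : E) (s + ε)))
      (𝓝[>] 0) (𝓝 (interaction k (closedBall (0 : E) r ×ˢ closedBall (0 : E) s))) := by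
  have hinter : ⋂ ε > 0, closedBall (0 : E) (r + ε) ×ˢ closedBall (0 : E) (s + ε) =
      closedBall 0 r ×ˢ closedBall 0 s := by
    ext z
    simp only [mem_iInter, mem_prod, mem_closedBall, forall_and, ← le_iff_forall_pos_le_add]
  rw [← hinter]
  refine tendsto_measure_biInter_gt
    (fun ε _ => (measurableSet_closedBall.prod measurableSet_closedBall).nullMeasurableSet)
    (fun ε δ _ hle => ?_) ⟨1, one_pos, interaction_prod_ne_top hk
      measure_closedBall_lt_top.ne measure_closedBall_lt_top.ne⟩
  gcongr

variable [Nontrivial E]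

theorem volume_closedBall_lt_volume_closedBall (hr : 0 ≤ r) (hrs : r < s) :
    volume (closedBall (0 : E) r) < volume (closedBall (0 : E) s) := by
  rw [Measure.addHaar_closedBall _ _ hr, Measure.addHaar_closedBall _ _ (hr.trans hrs.le)]
  refine ENNReal.mul_lt_mul_left (measure_ball_pos _ _ one_pos).ne' measure_ball_lt_top.ne ?_
  have hdim : Module.finrank ℝ E ≠ 0 := Module.finrank_pos.ne'
  exact (ENNReal.ofReal_lt_ofReal_iff (by positivity [hr.trans_lt hrs])).2
    (pow_lt_pow_left₀ hrs hr hdim)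

theorem NormAntitone.le_indicator_closedBall {F : E → ℝ≥0} (hF : NormAntitone F)
    (hF₁ : ∀ x, F x ≤ 1) (hr : 0 ≤ r)
    (hvol : volume (Function.support F) ≤ volume (closedBall (0 : E) r)) :
    F ≤ (closedBall 0 r).indicator 1 := by
  refine le_indicator (fun x _ => hF₁ x) fun x hx => ?_
  by_contra! hpos
  have hball : ball 0 ‖x‖ ⊆ Function.support F := fun y hy =>
    (hpos.trans_le (hF (by simpa using hy))).ne'
  have hlt := volume_closedBall_lt_volume_closedBall (E := E) hr (s := ‖x‖) (by simpa using hx)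
  rw [Measure.addHaar_closedBall_eq_addHaar_ball volume (0 : E) ‖x‖] at hlt
  exact ((measure_mono hball).trans hvol).not_gt hlt

theorem interaction_le_closedBall_of_isCompact (hk : Antitone k) (hr : 0 ≤ r) (hs : 0 ≤ s)
    (hK : IsCompact K) (hL : IsCompact L) (hU : IsOpen U) (hV : IsOpen V) (hKU : K ⊆ U)
    (hLV : L ⊆ V) (hUr : volume U ≤ volume (closedBall (0 : E) r))
    (hVs : volume V ≤ volume (closedBall (0 : E) s)) :
    interaction k (K ×ˢ L) ≤ interaction k (closedBall (0 : E) r ×ˢ closedBall (0 : E) s) := by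
  obtain ⟨_, _, F, hF, hKF⟩ := exists_isLipschitzCutoff_between hK hU hKU
  obtain ⟨_, _, G, hG, hLG⟩ := exists_isLipschitzCutoff_between hL hV hLV
  obtain ⟨F₁, G₁, ⟨hF₁, hF₁a⟩, ⟨hG₁, hG₁a⟩, hle⟩ :=
    exists_normAntitone_rieszFunctional_ge hk hF hG
  calc interaction k (K ×ˢ L)
      = rieszFunctional k (K.indicator 1) (L.indicator 1) :=
        interaction_eq_rieszFunctional hK.measurableSet hL.measurableSet
    _ ≤ rieszFunctional k F G := rieszFunctional_mono hKF hLG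
    _ ≤ rieszFunctional k F₁ G₁ := hle
    _ ≤ rieszFunctional k ((closedBall 0 r).indicator 1) ((closedBall 0 s).indicator 1) :=
        rieszFunctional_mono
          (hF₁a.le_indicator_closedBall hF₁.le_one hr (hF₁.volume_support_le.trans hUr))
          (hG₁a.le_indicator_closedBall hG₁.le_one hs (hG₁.volume_support_le.trans hVs))
    _ = _ := (interaction_eq_rieszFunctional measurableSet_closedBall
        measurableSet_closedBall).symm

theorem interaction_le_closedBall_of_isOpen (hk : Antitone k) (hr : 0 ≤ r) (hs : 0 ≤ s)
    (hU : IsOpen U) (hV : IsOpen V) (hUr : volume U ≤ volume (closedBall (0 : E) r))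
    (hVs : volume V ≤ volume (closedBall (0 : E) s)) :
    interaction k (U ×ˢ V) ≤ interaction k (closedBall (0 : E) r ×ˢ closedBall (0 : E) s) := by
  obtain ⟨K, hKmono, hK, rfl⟩ := exists_monotone_isCompact_iUnion_eq hU
  obtain ⟨L, hLmono, hL, rfl⟩ := exists_monotone_isCompact_iUnion_eq hV
  rw [← iUnion_prod_of_monotone hKmono hLmono, (hKmono.set_prod hLmono).measure_iUnion]
  exact iSup_le fun n => interaction_le_closedBall_of_isCompact hk hr hs (hK n) (hL n) hU hV
    (subset_iUnion K n) (subset_iUnion L n) hUr hVs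

theorem interaction_le_closedBall (hk : Antitone k) (hr : 0 ≤ r) (hs : 0 ≤ s)
    (hA : volume A ≤ volume (closedBall (0 : E) r))
    (hB : volume B ≤ volume (closedBall (0 : E) s)) :
    interaction k (A ×ˢ B) ≤ interaction k (closedBall (0 : E) r ×ˢ closedBall (0 : E) s) := by
  refine ge_of_tendsto (tendsto_interaction_closedBall hk r s) ?_
  filter_upwards [self_mem_nhdsWithin] with ε hε
  rw [mem_Ioi] at hε
  obtain ⟨U, hAU, hU, hUr⟩ := A.exists_isOpen_lt_of_lt _
    (hA.trans_lt (volume_closedBall_lt_volume_closedBall hr (lt_add_of_pos_right r hε)))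
  obtain ⟨V, hBV, hV, hVs⟩ := B.exists_isOpen_lt_of_lt _
    (hB.trans_lt (volume_closedBall_lt_volume_closedBall hs (lt_add_of_pos_right s hε)))
  exact (measure_mono (prod_mono hAU hBV)).trans
    (interaction_le_closedBall_of_isOpen hk (by positivity) (by positivity) hU hV hUr.le hVs.le)

theorem interaction_closedBall_compl_le (hk : Antitone k) (hr : 0 ≤ r) (hs : 0 ≤ s)
    (hB : MeasurableSet B) (hAr : volume A = volume (closedBall (0 : E) r))
    (hBs : volume B = volume (closedBall (0 : E) s)) :
    interaction k (closedBall (0 : E) r ×ˢ (closedBall (0 : E) s)ᶜ) ≤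
      interaction k (A ×ˢ Bᶜ) := by
  have hfin : interaction k (A ×ˢ B) ≠ ⊤ := interaction_prod_ne_top hk
    (hAr ▸ measure_closedBall_lt_top.ne) (hBs ▸ measure_closedBall_lt_top.ne)
  rw [← ENNReal.add_le_add_iff_left hfin, interaction_prod_add_compl hk A hB, hAr,
    ← interaction_prod_add_compl hk (closedBall 0 r) (measurableSet_closedBall (x := 0) (ε := s))]
  exact add_le_add_left (interaction_le_closedBall hk hr hs hAr.le hBs.le) _

end Interaction

section LayerCake

theorem lintegral_Ioc_rpow_sub_one {p : ℝ} (hp : 0 < p) (w : ℝ) :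
    ∫⁻ x in Ioc 0 w, ENNReal.ofReal (x ^ (p - 1)) = ENNReal.ofReal (max w 0 ^ p / p) := by
  rcases le_total w 0 with hw | hw
  · simp [Ioc_eq_empty_of_le hw, max_eq_right hw, zero_rpow hp.ne']
  · rw [← ofReal_integral_eq_lintegral_ofReal, ← intervalIntegral.integral_of_le hw,
      integral_rpow (.inl (by linarith)), sub_add_cancel, zero_rpow hp.ne', sub_zero,
      max_eq_left hw]
    · exact (intervalIntegral.intervalIntegrable_rpow' (by linarith)).1
    · filter_upwards [ae_restrict_mem measurableSet_Ioc] with x hx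
      exact rpow_nonneg hx.1.le _

theorem lintegral_Ioi_rpow_mul_sub {p : ℝ} (hp : 1 < p) (w : ℝ) :
    ENNReal.ofReal (p * (p - 1)) *
        ∫⁻ l in Ioi 0, ENNReal.ofReal (l ^ (p - 2)) * ENNReal.ofReal (w - l) =
      ENNReal.ofReal (max w 0 ^ p) := by
  have hlevel (l : ℝ) (hl : 0 < l) :
      volume.restrict (Ioc 0 w) {x | l < x} = ENNReal.ofReal (w - l) := by
    have hinter : {x | l < x} ∩ Ioc 0 w = Ioc l w := by
      ext x
      exact ⟨fun hx => ⟨hx.1, hx.2.2⟩, fun hx => ⟨hx.1, hl.trans hx.1, hx.2⟩⟩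
    rw [Measure.restrict_apply' measurableSet_Ioc, hinter, volume_Ioc]
  have hcake := lintegral_rpow_eq_lintegral_meas_lt_mul (volume.restrict (Ioc 0 w))
    (f := id) (p := p - 1) ((ae_restrict_mem measurableSet_Ioc).mono fun x hx => hx.1.le)
    aemeasurable_id (sub_pos.2 hp)
  have hexp : p - 1 - 1 = p - 2 := by ring
  simp only [id_eq, lintegral_Ioc_rpow_sub_one (one_pos.trans hp), hexp] at hcake
  rw [setLIntegral_congr_fun measurableSet_Ioi fun l hl => by rw [hlevel l hl, mul_comm]] at hcake
  rw [ENNReal.ofReal_mul (by linarith), mul_assoc, ← hcake, ← ENNReal.ofReal_mul (by linarith),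
    mul_div_cancel₀ _ (by linarith)]

theorem exists_measure_lintegral_sub_eq_rpow {p : ℝ} (hp : 1 ≤ p) :
    ∃ ρ : Measure ℝ, SFinite ρ ∧ (∀ᵐ l ∂ρ, 0 ≤ l) ∧
      ∀ w, ∫⁻ l, ENNReal.ofReal (w - l) ∂ρ = ENNReal.ofReal (max w 0 ^ p) := by
  rcases hp.eq_or_lt with rfl | hp
  · exact ⟨Measure.dirac 0, inferInstance, by simp [ae_dirac_eq], fun w => by simp⟩
  refine ⟨ENNReal.ofReal (p * (p - 1)) •
    (volume.restrict (Ioi 0)).withDensity fun l => ENNReal.ofReal (l ^ (p - 2)),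
    inferInstance, ?_, fun w => ?_⟩
  · refine (withDensity_absolutelyContinuous _ _).smul_left _ |>.ae_le ?_
    filter_upwards [ae_restrict_mem measurableSet_Ioi] with l hl using hl.le
  · rw [lintegral_smul_measure, lintegral_withDensity_eq_lintegral_mul _ (by fun_prop)
      (by fun_prop), smul_eq_mul]
    exact lintegral_Ioi_rpow_mul_sub hp w

end LayerCake

section CrossEnergy

variable {E : Type*} [NormedAddCommGroup E] [InnerProductSpace ℝ E] [FiniteDimensional ℝ E]
  [MeasurableSpace E] [BorelSpace E] {k : ℝ≥0 → ℝ≥0} {f g F G : E → ℝ} {p : ℝ}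

/-- The interaction energy between two functions, which arise as two slices `u(x₁, ·)` and
`u(y₁, ·)` of one function. -/
noncomputable def crossEnergy (p : ℝ) (k : ℝ≥0 → ℝ≥0) (f g : E → ℝ) : ℝ≥0∞ :=
  ∫⁻ z, ENNReal.ofReal (|f z.1 - g z.2| ^ p) ∂interaction k

/-- The part of `crossEnergy p k f g` that comes from the pairs where `f` exceeds `g`. -/
noncomputable def excessEnergy (p : ℝ) (k : ℝ≥0 → ℝ≥0) (f g : E → ℝ) : ℝ≥0∞ :=
  ∫⁻ z, ENNReal.ofReal (max (f z.1 - g z.2) 0 ^ p) ∂interaction k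

theorem crossEnergy_eq_add (hp : 0 < p) (hk : Antitone k) (hf : Measurable f)
    (hg : Measurable g) :
    crossEnergy p k f g = excessEnergy p k f g + excessEnergy p k g f := by
  have hswap : excessEnergy p k g f =
      ∫⁻ z, ENNReal.ofReal (max (g z.2 - f z.1) 0 ^ p) ∂interaction k :=
    ((measurePreserving_swap_interaction hk).lintegral_comp (by fun_prop)).symm
  rw [hswap, crossEnergy, excessEnergy, ← lintegral_add_left (by fun_prop)]
  refine lintegral_congr fun z => ?_
  rcases le_total (f z.1) (g z.2) with h | h
  · rw [max_eq_right (sub_nonpos.2 h), max_eq_left (sub_nonneg.2 h), zero_rpow hp.ne',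
      abs_sub_comm, abs_of_nonneg (sub_nonneg.2 h), ENNReal.ofReal_zero, zero_add]
  · rw [max_eq_left (sub_nonneg.2 h), max_eq_right (sub_nonpos.2 h), zero_rpow hp.ne',
      abs_of_nonneg (sub_nonneg.2 h), ENNReal.ofReal_zero, add_zero]

theorem volume_Ioi_zero_Ico {a b : ℝ} (ha : 0 ≤ a) :
    volume.restrict (Ioi 0) (Ico a b) = ENNReal.ofReal (b - a) := by
  rw [Measure.restrict_congr_set Ioi_ae_eq_Ici, Measure.restrict_apply measurableSet_Ico,
    inter_eq_left.2 (Ico_subset_Ici_self.trans (Ici_subset_Ici.2 ha)), volume_Ico]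

theorem excessEnergy_eq_lintegral_interaction {ρ : Measure ℝ} [SFinite ρ]
    (hρ : ∀ w, ∫⁻ l, ENNReal.ofReal (w - l) ∂ρ = ENNReal.ofReal (max w 0 ^ p))
    (hf : Measurable f) (hg : Measurable g) (hg₀ : 0 ≤ g) :
    excessEnergy p k f g =
      ∫⁻ q, interaction k ({x | q.2 + q.1 < f x} ×ˢ {y | q.2 < g y}ᶜ)
        ∂ρ.prod (volume.restrict (Ioi 0)) := by
  let N := ρ.prod (volume.restrict (Ioi (0 : ℝ)))
  let S : Set ((E × E) × (ℝ × ℝ)) := {w | w.2.2 + w.2.1 < f w.1.1} ∩ {w | g w.1.2 ≤ w.2.2}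
  have hS : MeasurableSet S := by
    refine (measurableSet_lt ?_ ?_).inter (measurableSet_le ?_ ?_) <;> fun_prop
  have hfiber (z : E × E) :
      N (Prod.mk z ⁻¹' S) = ENNReal.ofReal (max (f z.1 - g z.2) 0 ^ p) := by
    rw [← hρ, Measure.prod_apply (measurable_prodMk_left hS)]
    refine lintegral_congr fun l => ?_
    have hIco : Prod.mk l ⁻¹' (Prod.mk z ⁻¹' S) = Ico (g z.2) (f z.1 - l) := by
      ext t
      simp only [S, mem_preimage, mem_inter_iff, mem_ofPred_eq, mem_Ico, lt_sub_iff_add_lt,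
        and_comm]
    rw [hIco, volume_Ioi_zero_Ico (hg₀ z.2), sub_right_comm]
  calc excessEnergy p k f g = (interaction k).prod N S := by
        simp only [Measure.prod_apply hS, hfiber, excessEnergy]
    _ = _ := by
        rw [Measure.prod_apply_symm hS]
        congr! 3 with q
        ext z
        simp [S]

/-- For every `t > 0` the superlevel set `{t < F}` is, up to a null set, a ball centered at the
origin, and it has the same finite measure as `{t < f}`. -/
def IsSymmRearrangement (f F : E → ℝ) : Prop :=
  ∀ t > 0, ∃ r ≥ 0, {x | t < F x} =ᵐ[volume] closedBall (0 : E) r ∧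
    volume {x | t < f x} = volume (closedBall (0 : E) r)

variable [Nontrivial E]

theorem IsSymmRearrangement.excessEnergy_le (hp : 1 ≤ p) (hk : Antitone k) (hf : Measurable f)
    (hg : Measurable g) (hF : Measurable F) (hG : Measurable G) (hg₀ : 0 ≤ g) (hG₀ : 0 ≤ G)
    (hfF : IsSymmRearrangement f F) (hgG : IsSymmRearrangement g G) :
    excessEnergy p k F G ≤ excessEnergy p k f g := by
  obtain ⟨ρ, _, hρ₀, hρ⟩ := exists_measure_lintegral_sub_eq_rpow hp
  rw [excessEnergy_eq_lintegral_interaction hρ hf hg hg₀,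
    excessEnergy_eq_lintegral_interaction hρ hF hG hG₀]
  refine lintegral_mono_ae ?_
  filter_upwards [Measure.quasiMeasurePreserving_fst.ae hρ₀,
    Measure.quasiMeasurePreserving_snd.ae (ae_restrict_mem measurableSet_Ioi)] with q hq₁ hq₂
  obtain ⟨r, hr, hFr, hfr⟩ := hfF (q.2 + q.1) (add_pos_of_pos_of_nonneg hq₂ hq₁)
  obtain ⟨s, hs, hGs, hgs⟩ := hgG q.2 hq₂
  rw [interaction_prod_congr hFr hGs.compl]
  exact interaction_closedBall_compl_le hk hr hs (measurableSet_lt measurable_const hg) hfr hgs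

theorem IsSymmRearrangement.crossEnergy_le (hp : 1 ≤ p) (hk : Antitone k) (hf : Measurable f)
    (hg : Measurable g) (hF : Measurable F) (hG : Measurable G) (hf₀ : 0 ≤ f) (hg₀ : 0 ≤ g)
    (hF₀ : 0 ≤ F) (hG₀ : 0 ≤ G) (hfF : IsSymmRearrangement f F)
    (hgG : IsSymmRearrangement g G) :
    crossEnergy p k F G ≤ crossEnergy p k f g := by
  have hp₀ : 0 < p := one_pos.trans_le hp
  rw [crossEnergy_eq_add hp₀ hk hF hG, crossEnergy_eq_add hp₀ hk hf hg]
  exact add_le_add (hfF.excessEnergy_le hp hk hf hg hF hG hg₀ hG₀ hgG)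
    (hgG.excessEnergy_le hp hk hg hf hG hF hf₀ hF₀ hfF)

end CrossEnergy

section InfiniteLevels

variable {E : Type*} [NormedAddCommGroup E] [InnerProductSpace ℝ E] [FiniteDimensional ℝ E]
  [MeasurableSpace E] [BorelSpace E] {p : ℝ} {k : ℝ≥0 → ℝ≥0} {f g : E → ℝ} {A B : Set E}

theorem crossEnergy_comm (hk : Antitone k) (hf : Measurable f) (hg : Measurable g) :
    crossEnergy p k f g = crossEnergy p k g f := by
  rw [crossEnergy, ← (measurePreserving_swap_interaction hk).lintegral_comp (by fun_prop)]
  simp only [crossEnergy, Prod.fst_swap, Prod.snd_swap, abs_sub_comm]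

theorem crossEnergy_mono_of_abs_sub_le {F G : E → ℝ} (hp : 0 ≤ p)
    (h : ∀ x y, |F x - G y| ≤ |f x - g y|) : crossEnergy p k F G ≤ crossEnergy p k f g :=
  lintegral_mono fun z => ENNReal.ofReal_le_ofReal <|
    rpow_le_rpow (abs_nonneg _) (h z.1 z.2) hp

theorem mul_interaction_le_crossEnergy (hp : 0 ≤ p) (hf : Measurable f) (hg : Measurable g)
    {t t' : ℝ} (htt' : t ≤ t') :
    ENNReal.ofReal ((t' - t) ^ p) * interaction k ({x | t' < |f x|} ×ˢ {y | t < |g y|}ᶜ) ≤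
      crossEnergy p k f g := by
  refine le_trans ?_ (mul_meas_ge_le_lintegral₀ (by fun_prop) (ENNReal.ofReal ((t' - t) ^ p)))
  gcongr
  rintro ⟨x, y⟩ ⟨hx, hy⟩
  simp only [mem_ofPred_eq, mem_compl_iff, not_lt] at hx hy ⊢
  have hdiff : t' - t ≤ |f x - g y| := by linarith [abs_sub_abs_le_abs_sub (f x) (g y)]
  have := sub_nonneg.2 htt'
  gcongr

theorem le_setLIntegral_kernel_compl (hk : Antitone k) (hA : volume A ≠ ⊤) {R : ℝ≥0}
    (hR : volume A + 1 ≤ volume (closedBall (0 : E) R)) (x : E) :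
    (k R : ℝ≥0∞) ≤ ∫⁻ y in Aᶜ, k ‖x - y‖₊ := by
  have hvol : 1 ≤ volume (closedBall x R \ A) := by
    rw [← Measure.addHaar_closedBall_center volume x] at hR
    exact (ENNReal.le_sub_of_add_le_left hA hR).trans le_measure_sdiff
  calc (k R : ℝ≥0∞) ≤ k R * volume (closedBall x R \ A) := le_mul_of_one_le_right' hvol
    _ ≤ ∫⁻ y in closedBall x R \ A, k ‖x - y‖₊ := by
        rw [← setLIntegral_const]
        refine setLIntegral_mono ((measurable_kernel hk).comp measurable_prodMk_left) ?_
        rintro y ⟨hy, -⟩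
        rw [mem_closedBall', dist_eq_norm] at hy
        exact ENNReal.coe_le_coe.2 (hk hy)
    _ ≤ ∫⁻ y in Aᶜ, k ‖x - y‖₊ := lintegral_mono_set fun y hy => hy.2

variable [Nontrivial E]

theorem exists_le_volume_closedBall {a : ℝ≥0∞} (ha : a ≠ ⊤) :
    ∃ R : ℝ≥0, a ≤ volume (closedBall (0 : E) R) := by
  have hlim : Tendsto (fun n : ℕ => volume (closedBall (0 : E) n)) atTop (𝓝 ⊤) := by
    rw [← measure_univ_of_isAddLeftInvariant (volume : Measure E), ← iUnion_closedBall_nat 0]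
    exact tendsto_measure_iUnion_atTop fun i j hij => closedBall_subset_closedBall (by simpa)
  obtain ⟨n, hn⟩ := (hlim.eventually (lt_mem_nhds ha.lt_top)).exists
  exact ⟨n, hn.le⟩

theorem interaction_prod_compl_eq_top (hk : Antitone k) (hk₀ : ∀ r, 0 < k r)
    (hA : volume A ≠ ⊤) (hB : volume B = ⊤) : interaction k (B ×ˢ Aᶜ) = ⊤ := by
  obtain ⟨R, hR⟩ := exists_le_volume_closedBall (E := E) (a := volume A + 1) (by finiteness)
  rw [interaction_prod_eq_lintegral hk, eq_top_iff]
  calc (⊤ : ℝ≥0∞) = ∫⁻ _ in B, k R := by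
        rw [setLIntegral_const, hB, ENNReal.mul_top (by simpa using (hk₀ R).ne')]
    _ ≤ _ := lintegral_mono fun x => le_setLIntegral_kernel_compl hk hA hR x

theorem volume_superlevel_ne_top_of_crossEnergy_ne_top (hp : 0 ≤ p) (hk : Antitone k)
    (hk₀ : ∀ r, 0 < k r) (hf : Measurable f) (hg : Measurable g)
    (hfg : crossEnergy p k f g ≠ ⊤) {t t' : ℝ} (htt' : t < t')
    (hgt : volume {y | t < |g y|} ≠ ⊤) : volume {x | t' < |f x|} ≠ ⊤ := by
  intro hft
  have hle := mul_interaction_le_crossEnergy (k := k) hp hf hg htt'.le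
  rw [interaction_prod_compl_eq_top hk hk₀ hgt hft, ENNReal.mul_top] at hle
  · exact hfg (top_le_iff.1 hle)
  · simpa using rpow_pos_of_pos (sub_pos.2 htt') p

end InfiniteLevels

section Superlevel

variable {α : Type*} [MeasurableSpace α] {μ : Measure α} {f : α → ℝ} {V : ℝ≥0∞} {t : ℝ}

theorem antitone_measure_superlevel (μ : Measure α) (f : α → ℝ) :
    Antitone fun t => μ {x | t < f x} :=
  fun _ _ hst => measure_mono fun _ hx => hst.trans_lt hx

theorem exists_gt_lt_measure_superlevel (hV : V < μ {x | t < f x}) :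
    ∃ t' > t, V < μ {x | t' < f x} := by
  obtain ⟨u, hu, hut, hlim⟩ := exists_seq_strictAnti_tendsto t
  have hunion : {x | t < f x} = ⋃ n, {x | u n < f x} := by
    ext x
    simp only [mem_ofPred_eq, mem_iUnion]
    exact ⟨fun hx => (hlim.eventually (gt_mem_nhds hx)).exists, fun ⟨n, hn⟩ => (hut n).trans hn⟩
  have hmono : Monotone fun n => {x | u n < f x} := fun i j hij x hx =>
    (hu.antitone hij).trans_lt hx
  rw [hunion, hmono.measure_iUnion] at hV
  obtain ⟨n, hn⟩ := lt_iSup_iff.1 hV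
  exact ⟨u n, hut n, hn⟩

theorem exists_measure_superlevel_lt (hf : Measurable f) (hV : V ≠ 0)
    (ht : μ {x | t < f x} ≠ ⊤) : ∃ t', μ {x | t' < f x} < V := by
  have hlim : Tendsto (fun s => μ {x | s < f x}) atTop (𝓝 (μ (⋂ s, {x | s < f x}))) :=
    tendsto_measure_iInter_atTop
      (fun s => (measurableSet_lt measurable_const hf).nullMeasurableSet)
      (fun _ _ hst _ hx => hst.trans_lt hx) ⟨t, ht⟩
  have hinter : ⋂ s, {x | s < f x} = ∅ := by
    refine eq_empty_of_forall_notMem fun x hx => ?_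
    exact lt_irrefl (f x) (mem_iInter.1 hx (f x))
  rw [hinter, measure_empty] at hlim
  exact (hlim.eventually (gt_mem_nhds hV.bot_lt)).exists

/-- `τ` is the value at `V` of the generalized inverse of the distribution function. -/
theorem exists_forall_lt_iff_lt_measure_superlevel (hf : Measurable f) (hV : V ≠ 0)
    (hfin : ∃ t, μ {x | t < f x} ≠ ⊤) :
    ∃ τ ≥ 0, ∀ t > 0, t < τ ↔ V < μ {x | t < f x} := by
  obtain ⟨_, ht₀⟩ := hfin
  obtain ⟨M, hM⟩ := exists_measure_superlevel_lt hf hV ht₀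
  let T : Set ℝ := {t | 0 < t ∧ V < μ {x | t < f x}}
  have hT : BddAbove T := ⟨M, fun t ht => le_of_not_gt fun hMt =>
    (ht.2.trans_le (antitone_measure_superlevel μ f hMt.le)).not_gt hM⟩
  refine ⟨sSup T, Real.sSup_nonneg fun t ht => ht.1.le, fun t ht => ⟨fun hlt => ?_, fun hlt => ?_⟩⟩
  · have hne : T.Nonempty := nonempty_iff_ne_empty.2 fun hempty => by
      rw [hempty, Real.sSup_empty] at hlt
      exact hlt.not_gt ht
    obtain ⟨t', ht', htt'⟩ := exists_lt_of_lt_csSup hne hlt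
    exact ht'.2.trans_le (antitone_measure_superlevel μ f htt'.le)
  · obtain ⟨t', htt', ht'⟩ := exists_gt_lt_measure_superlevel hlt
    exact htt'.trans_le (le_csSup hT ⟨ht.trans htt', ht'⟩)

end Superlevel

section SchwarzRearrangement

variable {m : ℕ} {f g : EuclideanSpace ℝ (Fin m) → ℝ} {A : Set (EuclideanSpace ℝ (Fin m))}

theorem schwarzRadius_nonneg (m : ℕ) (A : Set (EuclideanSpace ℝ (Fin m))) :
    0 ≤ schwarzRadius m A := by
  unfold schwarzRadius
  positivity

theorem schwarzRearr_nonneg (m : ℕ) (f : EuclideanSpace ℝ (Fin m) → ℝ) :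
    0 ≤ schwarzRearr m f := fun _ =>
  integral_nonneg fun _ => indicator_nonneg (fun _ _ => zero_le_one) _

theorem measurable_schwarzRearr_slice {X : Type*} [MeasurableSpace X]
    {u : X × EuclideanSpace ℝ (Fin m) → ℝ} (hu : Measurable u) :
    Measurable fun z : X × EuclideanSpace ℝ (Fin m) =>
      schwarzRearr m (fun y => u (z.1, y)) z.2 := by
  classical
  have hlevel : MeasurableSet
      {w : (X × ℝ) × EuclideanSpace ℝ (Fin m) | w.1.2 < |u (w.1.1, w.2)|} :=
    measurableSet_lt (by fun_prop) (by fun_prop)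
  have hvol : Measurable fun w : X × ℝ => volume {y | w.2 < |u (w.1, y)|} :=
    measurable_measure_prodMk_left hlevel
  have hradius : Measurable fun w : X × ℝ => schwarzRadius m {y | w.2 < |u (w.1, y)|} := by
    unfold schwarzRadius
    fun_prop
  have hball : MeasurableSet {w : (X × EuclideanSpace ℝ (Fin m)) × ℝ |
      w.1.2 ∈ schwarzSet m {y | w.2 < |u (w.1.1, y)|}} := by
    simp only [schwarzSet, mem_ball_zero_iff]
    exact measurableSet_lt (by fun_prop)
      (hradius.comp (g := fun w : X × ℝ => schwarzRadius m {y | w.2 < |u (w.1, y)|})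
        (f := fun w : (X × EuclideanSpace ℝ (Fin m)) × ℝ => (w.1.1, w.2)) (by fun_prop))
  refine (StronglyMeasurable.integral_prod_right (Measurable.stronglyMeasurable ?_)).measurable
  convert (measurable_const (a := (1 : ℝ))).indicator hball using 1
  ext w
  simp [Function.uncurry, indicator_apply]

theorem measurable_schwarzRearr (hf : Measurable f) : Measurable (schwarzRearr m f) := by
  have hslice := measurable_schwarzRearr_slice (X := Unit) (u := fun z => f z.2) (by fun_prop)
  exact (hslice.comp (measurable_prodMk_left (x := ())) :)

variable [NeZero m]

theorem volume_schwarzSet (hA : volume A ≠ ⊤) : volume (schwarzSet m A) = volume A := by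
  have hball := (measure_ball_pos volume (0 : EuclideanSpace ℝ (Fin m)) one_pos).ne'
  rw [schwarzSet, Measure.addHaar_ball _ _ (schwarzRadius_nonneg m A), finrank_euclideanSpace_fin,
    schwarzRadius, rpow_inv_natCast_pow (by positivity) (NeZero.ne m), ← ENNReal.toReal_div,
    ENNReal.ofReal_toReal (ENNReal.div_ne_top hA hball),
    ENNReal.div_mul_cancel hball measure_ball_lt_top.ne]

theorem schwarzSet_eq_empty_of_volume_eq_top (hA : volume A = ⊤) : schwarzSet m A = ∅ := by
  simp [schwarzSet, schwarzRadius, hA, zero_rpow, NeZero.ne m]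

theorem schwarzSet_ae_eq_closedBall (A : Set (EuclideanSpace ℝ (Fin m))) :
    schwarzSet m A =ᵐ[volume] closedBall 0 (schwarzRadius m A) := by
  refine ae_eq_of_subset_of_measure_ge ball_subset_closedBall ?_
    measurableSet_ball.nullMeasurableSet measure_closedBall_lt_top.ne
  exact (Measure.addHaar_closedBall_eq_addHaar_ball volume _ _).le

theorem mem_schwarzSet_iff (hA : volume A ≠ ⊤) {x : EuclideanSpace ℝ (Fin m)} :
    x ∈ schwarzSet m A ↔ volume (ball (0 : EuclideanSpace ℝ (Fin m)) ‖x‖) < volume A := by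
  rw [← volume_schwarzSet hA, schwarzSet, mem_ball_zero_iff]
  refine ⟨fun hx => ?_, fun hlt => lt_of_not_ge fun hle => ?_⟩
  · simp only [← Measure.addHaar_closedBall_eq_addHaar_ball]
    exact volume_closedBall_lt_volume_closedBall (norm_nonneg x) hx
  · exact hlt.not_ge (measure_mono (ball_subset_ball hle))

theorem lt_schwarzRearr_iff (hf : Measurable f) (hfin : ∀ t > 0, volume {y | t < |f y|} ≠ ⊤)
    {x : EuclideanSpace ℝ (Fin m)} (hx : x ≠ 0) {t : ℝ} (ht : 0 < t) :
    t < schwarzRearr m f x ↔ x ∈ schwarzSet m {y | t < |f y|} := by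
  have hV := (measure_ball_pos volume (0 : EuclideanSpace ℝ (Fin m)) (norm_pos_iff.2 hx)).ne'
  obtain ⟨τ, hτ₀, hτ⟩ := exists_forall_lt_iff_lt_measure_superlevel (f := fun y => |f y|)
    (by fun_prop) hV ⟨1, hfin 1 one_pos⟩
  suffices schwarzRearr m f x = τ by rw [this, hτ t ht, mem_schwarzSet_iff (hfin t ht)]
  calc schwarzRearr m f x = ∫ t in Ioi 0, (Iio τ).indicator 1 t := by
        classical
        refine setIntegral_congr_fun measurableSet_Ioi fun t ht => ?_
        simp only [indicator_apply, mem_schwarzSet_iff (hfin t ht), ← hτ t ht, mem_Iio,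
          Pi.one_apply]
    _ = τ := by
        rw [integral_indicator_one measurableSet_Iio, measureReal_restrict_apply measurableSet_Iio,
          Iio_inter_Ioi, Real.volume_real_Ioo_of_le hτ₀, sub_zero]

theorem isSymmRearrangement_schwarzRearr (hf : Measurable f) (hf₀ : 0 ≤ f)
    (hfin : ∀ t > 0, volume {y | t < f y} ≠ ⊤) : IsSymmRearrangement f (schwarzRearr m f) := by
  have habs : (fun y => |f y|) = f := funext fun y => abs_of_nonneg (hf₀ y)
  intro t ht
  have hset := schwarzSet_ae_eq_closedBall {y | t < f y}
  refine ⟨_, schwarzRadius_nonneg m {y | t < f y}, EventuallyEq.trans ?_ hset, ?_⟩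
  · filter_upwards [Measure.ae_ne volume (0 : EuclideanSpace ℝ (Fin m))] with x hx
    have hiff := lt_schwarzRearr_iff hf (by simpa only [congrFun habs _] using hfin) hx ht
    simp only [congrFun habs _] at hiff
    exact propext hiff
  · rw [← measure_congr hset, volume_schwarzSet (hfin t ht)]

end SchwarzRearrangement

section CriticalLevel

variable {α : Type*} {c t : ℝ} {f : α → ℝ}

/-- The part `(|f| - c)⁺` of `|f|` above the level `c`. -/
def truncate (c : ℝ) (f : α → ℝ) : α → ℝ := fun x => max (|f x| - c) 0

theorem lt_truncate_iff (ht : 0 ≤ t) {x : α} : t < truncate c f x ↔ t + c < |f x| := by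
  rw [truncate, lt_max_iff, or_iff_left ht.not_gt, lt_sub_iff_add_lt]

theorem truncate_nonneg (c : ℝ) (f : α → ℝ) : 0 ≤ truncate c f :=
  fun _ => le_max_right _ _

theorem abs_truncate_sub_truncate_le (c : ℝ) (f g : α → ℝ) (x y : α) :
    |truncate c f x - truncate c g y| ≤ |f x - g y| := by
  refine (abs_max_sub_max_le_abs _ _ _).trans ?_
  rw [sub_sub_sub_cancel_right]
  exact abs_abs_sub_abs_le_abs_sub _ _

variable [MeasurableSpace α] {μ : Measure α}

theorem measurable_truncate (c : ℝ) (hf : Measurable f) : Measurable (truncate c f) := by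
  unfold truncate
  fun_prop

/-- The superlevel sets of `|f|` above the level `c` have finite measure, and those at positive
levels below `c` have infinite measure. The Schwarz rearrangement of `f` only sees the part of
`|f|` above `c`, because `schwarzRadius` is `0` on sets of infinite measure. -/
structure IsCriticalLevel (μ : Measure α) (f : α → ℝ) (c : ℝ) : Prop where
  nonneg : 0 ≤ c
  ne_top : ∀ t > c, μ {x | t < |f x|} ≠ ⊤
  eq_top : ∀ t ∈ Ioo 0 c, μ {x | t < |f x|} = ⊤

theorem exists_isCriticalLevel (hf : ∃ t > 0, μ {x | t < |f x|} ≠ ⊤) :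
    ∃ c, IsCriticalLevel μ f c := by
  let S : Set ℝ := {t | 0 < t ∧ μ {x | t < |f x|} ≠ ⊤}
  have hS : S.Nonempty := hf
  have hS₀ : ∀ t ∈ S, 0 ≤ t := fun t ht => ht.1.le
  refine ⟨sInf S, Real.sInf_nonneg hS₀, fun t ht => ?_, fun t ht => ?_⟩
  · obtain ⟨t', ht', htt'⟩ := exists_lt_of_csInf_lt hS ht
    exact ne_top_of_le_ne_top ht'.2 (antitone_measure_superlevel μ (|f ·|) htt'.le)
  · by_contra hne
    exact ht.2.not_ge (csInf_le ⟨0, hS₀⟩ ⟨ht.1, hne⟩)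

end CriticalLevel

section CriticalLevelOfEnergy

variable {E : Type*} [NormedAddCommGroup E] [InnerProductSpace ℝ E] [FiniteDimensional ℝ E]
  [MeasurableSpace E] [BorelSpace E] [Nontrivial E] {p c : ℝ} {k : ℝ≥0 → ℝ≥0} {f g : E → ℝ}

theorem IsCriticalLevel.of_crossEnergy_ne_top (hp : 0 ≤ p) (hk : Antitone k)
    (hk₀ : ∀ r, 0 < k r) (hf : Measurable f) (hg : Measurable g)
    (hfg : crossEnergy p k f g ≠ ⊤) (hc : IsCriticalLevel volume f c) :
    IsCriticalLevel volume g c where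
  nonneg := hc.nonneg
  ne_top t ht := by
    obtain ⟨t', hct', ht't⟩ := exists_between ht
    rw [crossEnergy_comm hk hf hg] at hfg
    exact volume_superlevel_ne_top_of_crossEnergy_ne_top hp hk hk₀ hg hf hfg ht't
      (hc.ne_top t' hct')
  eq_top t ht := by
    obtain ⟨t', htt', ht'c⟩ := exists_between ht.2
    by_contra hne
    exact volume_superlevel_ne_top_of_crossEnergy_ne_top hp hk hk₀ hf hg hfg htt' hne
      (hc.eq_top t' ⟨ht.1.trans htt', ht'c⟩)

end CriticalLevelOfEnergy

section SchwarzEnergy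

variable {m : ℕ} [NeZero m] {p c : ℝ} {k : ℝ≥0 → ℝ≥0} {f g : EuclideanSpace ℝ (Fin m) → ℝ}

theorem schwarzRearr_truncate (hc : IsCriticalLevel volume f c) :
    schwarzRearr m (truncate c f) = schwarzRearr m f := by
  ext x
  let φ : ℝ → ℝ := fun t => (schwarzSet m {y | t < |f y|}).indicator (fun _ => (1 : ℝ)) x
  calc schwarzRearr m (truncate c f) x = ∫ t in Ioi 0, φ (t + c) := by
        refine setIntegral_congr_fun measurableSet_Ioi fun t ht => ?_
        simp only [φ, abs_of_nonneg (truncate_nonneg c f _), lt_truncate_iff (mem_Ioi.1 ht).le]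
    _ = ∫ t in Ioi c, φ t := by
        have hshift := (measurePreserving_add_right volume c).setIntegral_preimage_emb
          (measurableEmbedding_addRight c) φ (Ioi c)
        rwa [preimage_add_const_Ioi, sub_self] at hshift
    _ = ∫ t in Ioi 0, φ t := by
        refine (setIntegral_eq_of_subset_of_ae_sdiff_eq_zero measurableSet_Ioi.nullMeasurableSet
          (Ioi_subset_Ioi hc.nonneg) ?_).symm
        filter_upwards [Measure.ae_ne volume c] with t htc ⟨ht₀, ht⟩
        have htc : t < c := (not_lt.1 ht).lt_of_ne htc
        simp only [φ, schwarzSet_eq_empty_of_volume_eq_top (hc.eq_top t ⟨ht₀, htc⟩),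
          indicator_empty]

theorem schwarzRearr_eq_zero (hf : ∀ t > 0, volume {y | t < |f y|} = ⊤) :
    schwarzRearr m f = 0 := by
  ext x
  refine setIntegral_eq_zero_of_forall_eq_zero fun t ht => ?_
  rw [schwarzSet_eq_empty_of_volume_eq_top (hf t ht), indicator_empty]

theorem IsCriticalLevel.isSymmRearrangement_schwarzRearr (hf : Measurable f)
    (hc : IsCriticalLevel volume f c) :
    IsSymmRearrangement (truncate c f) (schwarzRearr m f) := by
  rw [← schwarzRearr_truncate hc]
  refine Rearrangement.isSymmRearrangement_schwarzRearr (measurable_truncate c hf)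
    (truncate_nonneg c f) fun t ht => ?_
  simp only [lt_truncate_iff (le_of_lt ht)]
  exact hc.ne_top _ (lt_add_of_pos_left c ht)

theorem IsCriticalLevel.crossEnergy_schwarzRearr_le (hp : 1 ≤ p) (hk : Antitone k)
    (hf : Measurable f) (hg : Measurable g) (hfc : IsCriticalLevel volume f c)
    (hgc : IsCriticalLevel volume g c) :
    crossEnergy p k (schwarzRearr m f) (schwarzRearr m g) ≤ crossEnergy p k f g :=
  calc crossEnergy p k (schwarzRearr m f) (schwarzRearr m g)
      ≤ crossEnergy p k (truncate c f) (truncate c g) :=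
        (hfc.isSymmRearrangement_schwarzRearr hf).crossEnergy_le hp hk (measurable_truncate c hf)
          (measurable_truncate c hg) (measurable_schwarzRearr hf) (measurable_schwarzRearr hg)
          (truncate_nonneg c f) (truncate_nonneg c g) (schwarzRearr_nonneg m f)
          (schwarzRearr_nonneg m g) (hgc.isSymmRearrangement_schwarzRearr hg)
    _ ≤ crossEnergy p k f g :=
        crossEnergy_mono_of_abs_sub_le (by positivity) (abs_truncate_sub_truncate_le c f g)

theorem crossEnergy_schwarzRearr_le (hp : 1 ≤ p) (hk : Antitone k) (hk₀ : ∀ r, 0 < k r)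
    (hf : Measurable f) (hg : Measurable g) :
    crossEnergy p k (schwarzRearr m f) (schwarzRearr m g) ≤ crossEnergy p k f g := by
  have hp₀ : 0 < p := one_pos.trans_le hp
  by_cases hfg : crossEnergy p k f g = ⊤
  · exact hfg ▸ le_top
  by_cases hlevel : ∃ t > 0, volume {y | t < |f y|} ≠ ⊤
  · obtain ⟨c, hc⟩ := exists_isCriticalLevel hlevel
    exact hc.crossEnergy_schwarzRearr_le hp hk hf hg
      (hc.of_crossEnergy_ne_top hp₀.le hk hk₀ hf hg hfg)
  · push Not at hlevel
    have hg_level : ∀ t > 0, volume {y | t < |g y|} = ⊤ := fun t ht => by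
      by_contra hne
      exact volume_superlevel_ne_top_of_crossEnergy_ne_top hp₀.le hk hk₀ hf hg hfg
        (lt_add_one t) hne (hlevel (t + 1) (by positivity))
    simp [crossEnergy, schwarzRearr_eq_zero hlevel, schwarzRearr_eq_zero hg_level,
      zero_rpow hp₀.ne']

end SchwarzEnergy

section Slicing

theorem setLIntegral_lintegral_prod_eq {X Y : Type*} [MeasurableSpace X] [MeasurableSpace Y]
    {μ : Measure X} {ν : Measure Y} [SFinite μ] [SFinite ν] (S : Set X)
    {H : X × Y → X × Y → ℝ≥0∞} (hH : Measurable (Function.uncurry H)) :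
    ∫⁻ z in Prod.fst ⁻¹' S, ∫⁻ w, H z w ∂μ.prod ν ∂μ.prod ν =
      ∫⁻ a in S, ∫⁻ b, ∫⁻ x, ∫⁻ y, H (a, x) (b, y) ∂ν ∂ν ∂μ ∂μ := by
  have hinner (z : X × Y) : ∫⁻ w, H z w ∂μ.prod ν = ∫⁻ b, ∫⁻ y, H z (b, y) ∂ν ∂μ :=
    lintegral_prod _ (hH.comp measurable_prodMk_left).aemeasurable
  rw [← prod_univ, ← Measure.prod_restrict, Measure.restrict_univ,
    lintegral_prod _ hH.lintegral_prod_right.aemeasurable]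
  refine lintegral_congr fun a => ?_
  simp only [hinner]
  refine lintegral_lintegral_swap (Measurable.aemeasurable ?_)
  exact Measurable.lintegral_prod_right (f := fun (w : Y × X) (y : Y) => H (a, w.1) (w.2, y))
    (hH.comp (f := fun w : (Y × X) × Y => ((a, w.1.1), (w.1.2, w.2))) (by fun_prop))

/-- The kernel `r ↦ (d² + r²)^(-q/2)`: the restriction of `|x - y|^(-q)` to two slices at
distance `d`. -/
noncomputable def gagliardoKernel (q : ℝ) (d r : ℝ≥0) : ℝ≥0 :=
  (NNReal.sqrt (d ^ 2 + r ^ 2) ^ q)⁻¹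

variable {q : ℝ} {d : ℝ≥0}

theorem sqrt_add_sq_pos (hd : d ≠ 0) (r : ℝ≥0) : 0 < NNReal.sqrt (d ^ 2 + r ^ 2) :=
  NNReal.sqrt_pos.2 (by positivity)

theorem gagliardoKernel_pos (hd : d ≠ 0) (r : ℝ≥0) : 0 < gagliardoKernel q d r :=
  inv_pos.2 (NNReal.rpow_pos (sqrt_add_sq_pos hd r))

theorem antitone_gagliardoKernel (hq : 0 ≤ q) (hd : d ≠ 0) : Antitone (gagliardoKernel q d) := by
  intro r r' hr
  refine inv_anti₀ (NNReal.rpow_pos (sqrt_add_sq_pos hd r)) ?_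
  gcongr

theorem ofReal_div_eq_gagliardoKernel_mul {E : Type*} [SeminormedAddCommGroup E] (w a b : ℝ)
    (x y : E) :
    ENNReal.ofReal (w / Real.sqrt ((a - b) ^ 2 + ‖x - y‖ ^ 2) ^ q) =
      gagliardoKernel q ‖a - b‖₊ ‖x - y‖₊ * ENNReal.ofReal w := by
  have hkernel : ((gagliardoKernel q ‖a - b‖₊ ‖x - y‖₊ : ℝ≥0) : ℝ) =
      (Real.sqrt ((a - b) ^ 2 + ‖x - y‖ ^ 2) ^ q)⁻¹ := by
    simp [gagliardoKernel]
  rw [div_eq_inv_mul, ← hkernel, ENNReal.ofReal_mul NNReal.zero_le_coe, ENNReal.ofReal_coe_nnreal]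

variable {m : ℕ} {s p : ℝ} {u : ℝ × EuclideanSpace ℝ (Fin m) → ℝ}

theorem crossEnergy_gagliardoKernel {f g : EuclideanSpace ℝ (Fin m) → ℝ} (hf : Measurable f)
    (hg : Measurable g) (a b : ℝ) :
    crossEnergy p (gagliardoKernel q ‖a - b‖₊) f g = ∫⁻ x, ∫⁻ y,
      ENNReal.ofReal (|f x - g y| ^ p / Real.sqrt ((a - b) ^ 2 + ‖x - y‖ ^ 2) ^ q) := by
  have hkernel : Measurable (gagliardoKernel q ‖a - b‖₊) := by
    unfold gagliardoKernel
    fun_prop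
  rw [crossEnergy, interaction, lintegral_withDensity_eq_lintegral_mul _ (by fun_prop)
    (by fun_prop), Measure.volume_eq_prod, lintegral_prod _ (by fun_prop)]
  simp only [ofReal_div_eq_gagliardoKernel_mul, Pi.mul_apply]

theorem gagP_eq_lintegral_crossEnergy (s p : ℝ) (hu : Measurable u) :
    gagP m s p u = ∫⁻ a in Ioo (-π) π, ∫⁻ b : ℝ,
      crossEnergy p (gagliardoKernel (m + 1 + s * p) ‖a - b‖₊) (fun x => u (a, x))
        fun y => u (b, y) := by
  have hslice (a : ℝ) : Measurable fun x => u (a, x) := hu.comp measurable_prodMk_left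
  simp only [crossEnergy_gagliardoKernel (hslice _) (hslice _)]
  exact setLIntegral_lintegral_prod_eq (Ioo (-π) π) (H := fun z w => ENNReal.ofReal
    (|u z - u w| ^ p / Real.sqrt ((z.1 - w.1) ^ 2 + ‖z.2 - w.2‖ ^ 2) ^ (m + 1 + s * p)))
    (by fun_prop)

theorem gagP_cylRearr_le [NeZero m] (hq : 0 ≤ m + 1 + s * p) (hp : 1 ≤ p) (hu : Measurable u) :
    gagP m s p (cylRearr m u) ≤ gagP m s p u := by
  have hrearr : Measurable (cylRearr m u) := measurable_schwarzRearr_slice hu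
  rw [gagP_eq_lintegral_crossEnergy s p hu, gagP_eq_lintegral_crossEnergy s p hrearr]
  refine lintegral_mono fun a => lintegral_mono_ae ?_
  filter_upwards [Measure.ae_ne volume a] with b hb
  have hd : ‖a - b‖₊ ≠ 0 := nnnorm_ne_zero_iff.2 (sub_ne_zero.2 hb.symm)
  simp only [cylRearr]
  exact crossEnergy_schwarzRearr_le hp (antitone_gagliardoKernel hq hd) (gagliardoKernel_pos hd)
    (hu.comp measurable_prodMk_left) (hu.comp measurable_prodMk_left)

end Slicing

end Rearrangement

theorem stmt_10_general (m : ℕ) (hm : 1 ≤ m) (s p : ℝ) (hq : 0 ≤ m + 1 + s * p) (hp : 1 ≤ p)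
    (u : ℝ × EuclideanSpace ℝ (Fin m) → ℝ) (hu : Measurable u) :
    gagSeminorm m s p (cylRearr m u) ≤ gagSeminorm m s p u := by
  have : NeZero m := ⟨Nat.one_le_iff_ne_zero.1 hm⟩
  exact ENNReal.rpow_le_rpow (Rearrangement.gagP_cylRearr_le hq hp hu) (by positivity)

theorem stmt_10 (m : ℕ) (hm : 1 ≤ m) (s p : ℝ) (hs0 : 0 < s) (hs1 : s < 1) (hp : 1 ≤ p)
    (u : ℝ × EuclideanSpace ℝ (Fin m) → ℝ) (hu : Measurable u)
    (huper : ∀ x : ℝ × EuclideanSpace ℝ (Fin m), u (x.1 + 2 * π, x.2) = u x)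
    (hfin : gagP m s p u ≠ ⊤) :
    gagSeminorm m s p (cylRearr m u) ≤ gagSeminorm m s p u :=
  stmt_10_general m hm s p (by positivity) hp u hu
end

section
/- Let n ≥ 1, 0 < s < 1, 1 ≤ p < ∞, set λ = (n+sp)/2, and let u : ℝⁿ → ℝ be a measurable function which is 2π-periodic in the variable x₁. Then the following Laplace-transform representation of the periodic Gagliardo seminorm holds (with both sides possibly +∞): ([u]^{per}_{W^{s,p}})^p = (1/Γ(λ)) ∫₀^∞ dt t^{λ−1} ∫_{ℝ^{n−1}} dx' ∫_{ℝ^{n−1}} dy' Φ(u,x',y',t) e^{−|x'−y'|² t}, where Φ(u,x',y',t) := ∫_{−π}^{π} dx₁ ∫_{−π}^{π} dy₁ |u(x₁,x') − u(y₁,y')|^p · Σ_{k∈ℤ} e^{−(x₁−y₁+2kπ)² t}. -/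
/-!
For `r > 0` the Gamma integral gives `r ^ (-λ) = Γ(λ)⁻¹ ∫₀^∞ t ^ (λ - 1) e ^ (-r t) dt`. Taking `r`
to be the squared distance of `x` and `y` turns the Gagliardo kernel into a superposition of
Gaussians, which split into a factor in the first coordinates and a factor in the remaining ones.
All integrands are nonnegative, so Tonelli's theorem moves the `t`-integral outside. Since `u` is
periodic, integrating the one-dimensional Gaussian over the whole line is the same as integrating
its periodization over one period.
-/

open MeasureTheory Real
open scoped ENNReal

section Unfolding

variable {T : ℝ}

lemma lintegral_eq_tsum_setLIntegral_Ioo (hT : 0 < T) (a : ℝ) (f : ℝ → ℝ≥0∞) :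
    ∫⁻ y, f y = ∑' k : ℤ, ∫⁻ y in Set.Ioo a (a + T), f (y - k * T) := by
  let e : ℤ ≃ AddSubgroup.zmultiples T :=
    Equiv.ofInjective (fun k : ℤ => k • T) (zsmul_left_strictMono hT).injective
  have he (k : ℤ) : (e k : ℝ) = k * T := zsmul_eq_mul T k
  rw [(isAddFundamentalDomain_Ioc hT a volume).lintegral_eq_tsum' f, ← e.tsum_eq]
  refine tsum_congr fun k => ?_
  rw [setLIntegral_congr Ioo_ae_eq_Ioc.symm]
  simp only [AddSubgroup.vadd_def, AddSubgroup.coe_neg, he, vadd_eq_add, neg_add_eq_sub]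

lemma lintegral_mul_of_periodic (hT : 0 < T) (a : ℝ) {f g : ℝ → ℝ≥0∞} (hf : Measurable f)
    (hper : f.Periodic T) (hg : Measurable g) :
    ∫⁻ y, f y * g y = ∫⁻ y in Set.Ioo a (a + T), f y * ∑' k : ℤ, g (y - k * T) := by
  rw [lintegral_eq_tsum_setLIntegral_Ioo hT a, ← lintegral_tsum fun k => by fun_prop]
  simp only [hper.sub_int_mul_eq, ENNReal.tsum_mul_left]

end Unfolding

lemma summable_exp_neg_sq_add_int_mul {t T : ℝ} (ht : 0 < t) (hT : T ≠ 0) (z : ℝ) :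
    Summable fun k : ℤ => Real.exp (-(z + k * T) ^ 2 * t) := by
  refine (HurwitzKernelBounds.summable_f_int 0 (z / T)
    (show 0 < T ^ 2 * t / π by positivity)).congr fun k => ?_
  rw [HurwitzKernelBounds.f_int, pow_zero, one_mul]
  congr 1
  field_simp
  ring

lemma lintegral_mul_gaussian_eq_setLIntegral_periodized {t T : ℝ} (ht : 0 < t)
    (hT : 0 < T) (a z : ℝ) {f : ℝ → ℝ≥0∞} (hf : Measurable f) (hper : f.Periodic T) :
    ∫⁻ y, f y * ENNReal.ofReal (Real.exp (-(z - y) ^ 2 * t)) =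
      ∫⁻ y in Set.Ioo a (a + T),
        f y * ENNReal.ofReal (∑' k : ℤ, Real.exp (-(z - y + k * T) ^ 2 * t)) := by
  rw [lintegral_mul_of_periodic hT a hf hper (by fun_prop)]
  refine lintegral_congr fun y => ?_
  rw [ENNReal.ofReal_tsum_of_nonneg (fun _ => (Real.exp_pos _).le)
    (summable_exp_neg_sq_add_int_mul ht hT.ne' _)]
  simp only [sub_sub_eq_add_sub, sub_add_eq_add_sub]

section Laplace

variable {α r : ℝ}

lemma ofReal_one_div_sqrt_rpow_eq_laplace (hα : 0 < α) (hr : 0 < r) :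
    ENNReal.ofReal (1 / √r ^ α) = ENNReal.ofReal (1 / Real.Gamma (α / 2)) *
      ∫⁻ t in Set.Ioi (0 : ℝ),
        ENNReal.ofReal (t ^ (α / 2 - 1)) * ENNReal.ofReal (Real.exp (-r * t)) := by
  have hval : ∫ t in Set.Ioi (0 : ℝ), t ^ (α / 2 - 1) * Real.exp (-r * t) =
      1 / √r ^ α * Real.Gamma (α / 2) := by
    simp only [neg_mul, integral_rpow_mul_exp_neg_mul_Ioi (half_pos hα) hr]
    rw [Real.div_rpow zero_le_one hr.le, Real.one_rpow, Real.rpow_div_two_eq_sqrt _ hr.le]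
  have hint : IntegrableOn (fun t => t ^ (α / 2 - 1) * Real.exp (-r * t)) (Set.Ioi 0) :=
    .of_integral_ne_zero (by rw [hval]; positivity)
  have hnonneg : 0 ≤ᵐ[volume.restrict (Set.Ioi 0)]
      fun t => t ^ (α / 2 - 1) * Real.exp (-r * t) := by
    filter_upwards [ae_restrict_mem measurableSet_Ioi] with t ht
    have : 0 < t := ht
    positivity
  simp only [← ENNReal.ofReal_mul' (Real.exp_pos _).le]
  rw [← ofReal_integral_eq_lintegral_ofReal hint hnonneg, hval,
    ← ENNReal.ofReal_mul (by positivity)]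
  congr 1
  field_simp

-- At `r = 0` with `c ≠ 0` the left side would be the junk value `c / 0 = 0`, the right side `∞`.
lemma ofReal_div_sqrt_rpow_eq_laplace (hα : 0 < α) (hr : 0 ≤ r) {c : ℝ} (hc : 0 ≤ c)
    (hrc : r = 0 → c = 0) :
    ENNReal.ofReal (c / √r ^ α) = ENNReal.ofReal (1 / Real.Gamma (α / 2)) *
      ∫⁻ t in Set.Ioi (0 : ℝ), ENNReal.ofReal (t ^ (α / 2 - 1)) *
        (ENNReal.ofReal c * ENNReal.ofReal (Real.exp (-r * t))) := by
  rcases hr.eq_or_lt with hr | hr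
  · simp [hrc hr.symm]
  · rw [← mul_one_div, ENNReal.ofReal_mul hc, ofReal_one_div_sqrt_rpow_eq_laplace hα hr]
    simp only [mul_left_comm _ (ENNReal.ofReal c)]
    rw [lintegral_const_mul' _ _ ENNReal.ofReal_ne_top, mul_left_comm]

end Laplace

section Tonelli

variable {X Y Z W : Type*} [MeasurableSpace X] [MeasurableSpace Y] [MeasurableSpace Z]
  [MeasurableSpace W]

lemma lintegral_lintegral_lintegral_rotate {μ : Measure X} {ν : Measure Y} {τ : Measure Z}
    [SFinite μ] [SFinite ν] [SFinite τ] {f : X → Y → Z → ℝ≥0∞}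
    (hf : Measurable fun q : X × Y × Z => f q.1 q.2.1 q.2.2) :
    ∫⁻ x, ∫⁻ y, ∫⁻ z, f x y z ∂τ ∂ν ∂μ = ∫⁻ z, ∫⁻ x, ∫⁻ y, f x y z ∂ν ∂μ ∂τ := by
  calc ∫⁻ x, ∫⁻ y, ∫⁻ z, f x y z ∂τ ∂ν ∂μ
      = ∫⁻ x, ∫⁻ z, ∫⁻ y, f x y z ∂ν ∂τ ∂μ :=
        lintegral_congr fun x => lintegral_lintegral_swap
          (hf.comp measurable_prodMk_left).aemeasurable
    _ = ∫⁻ z, ∫⁻ x, ∫⁻ y, f x y z ∂ν ∂μ ∂τ := by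
        refine lintegral_lintegral_swap (Measurable.lintegral_prod_right ?_).aemeasurable
        exact hf.comp (f := fun q : (X × Z) × Y => (q.1.1, q.2, q.1.2)) (by fun_prop)

lemma lintegral_prod_lintegral_prod_symm {μ : Measure X} {κ : Measure Y} {ν : Measure Z}
    {η : Measure W} [SFinite μ] [SFinite κ] [SFinite ν] [SFinite η]
    {f : X × Y → Z × W → ℝ≥0∞} (hf : Measurable (Function.uncurry f)) :
    ∫⁻ x, ∫⁻ y, f x y ∂(ν.prod η) ∂(μ.prod κ) =
      ∫⁻ b, ∫⁻ d, ∫⁻ a, ∫⁻ c, f (a, b) (c, d) ∂ν ∂μ ∂η ∂κ := by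
  calc ∫⁻ x, ∫⁻ y, f x y ∂(ν.prod η) ∂(μ.prod κ)
      = ∫⁻ b, ∫⁻ a, ∫⁻ y, f (a, b) y ∂(ν.prod η) ∂μ ∂κ :=
        lintegral_prod_symm _ hf.lintegral_prod_right'.aemeasurable
    _ = ∫⁻ b, ∫⁻ a, ∫⁻ d, ∫⁻ c, f (a, b) (c, d) ∂ν ∂η ∂μ ∂κ :=
        lintegral_congr fun b => lintegral_congr fun a =>
          lintegral_prod_symm _ hf.of_uncurry_left.aemeasurable
    _ = ∫⁻ b, ∫⁻ d, ∫⁻ a, ∫⁻ c, f (a, b) (c, d) ∂ν ∂μ ∂η ∂κ := by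
        refine lintegral_congr fun b => lintegral_lintegral_swap
          (Measurable.lintegral_prod_right ?_).aemeasurable
        exact hf.comp (f := fun q : (X × W) × Z => ((q.1.1, b), (q.2, q.1.2))) (by fun_prop)

end Tonelli

section Gaussian

variable {E : Type*} [SeminormedAddCommGroup E]

/-- The squared Euclidean distance on `ℝ × E`, used in place of the metric of the product type,
which is the sup metric. -/
def sqDist (x y : ℝ × E) : ℝ :=
  (x.1 - y.1) ^ 2 + ‖x.2 - y.2‖ ^ 2

lemma sqDist_nonneg (x y : ℝ × E) : 0 ≤ sqDist x y :=
  add_nonneg (sq_nonneg _) (sq_nonneg _)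

lemma ofReal_exp_neg_sqDist_mul (x y : ℝ × E) (t : ℝ) :
    ENNReal.ofReal (Real.exp (-sqDist x y * t)) =
      ENNReal.ofReal (Real.exp (-(x.1 - y.1) ^ 2 * t)) *
        ENNReal.ofReal (Real.exp (-‖x.2 - y.2‖ ^ 2 * t)) := by
  rw [← ENNReal.ofReal_mul (Real.exp_pos _).le, ← Real.exp_add, sqDist]
  ring_nf

variable [MeasurableSpace E] [BorelSpace E] [SecondCountableTopology E]

lemma measurable_sqDist : Measurable fun q : (ℝ × E) × (ℝ × E) => sqDist q.1 q.2 := by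
  unfold sqDist
  fun_prop

lemma lintegral_lintegral_rpow_mul_gaussian_swap (β : ℝ) {τ : Measure ℝ} [SFinite τ]
    {μ ν : Measure (ℝ × E)} [SFinite μ] [SFinite ν] {w : ℝ × E → ℝ × E → ℝ≥0∞}
    (hw : Measurable (Function.uncurry w)) :
    ∫⁻ x, ∫⁻ y, ∫⁻ t, ENNReal.ofReal (t ^ β) *
        (w x y * ENNReal.ofReal (Real.exp (-sqDist x y * t))) ∂τ ∂ν ∂μ =
      ∫⁻ t, ENNReal.ofReal (t ^ β) *
        ∫⁻ x, ∫⁻ y, w x y * ENNReal.ofReal (Real.exp (-sqDist x y * t)) ∂ν ∂μ ∂τ := by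
  have hpair : Measurable fun q : (ℝ × E) × (ℝ × E) × ℝ => (q.1, q.2.1) := by fun_prop
  have hweight := hw.comp hpair
  have hdist := measurable_sqDist.comp hpair
  simp only [Function.comp_def, Function.uncurry_apply_pair] at hweight hdist
  rw [lintegral_lintegral_lintegral_rotate (by fun_prop)]
  simp only [lintegral_const_mul' _ _ ENNReal.ofReal_ne_top]

lemma lintegral_prod_mul_gaussian_eq_lintegral_periodized {t T : ℝ} (ht : 0 < t) (hT : 0 < T)
    (a : ℝ) {μ : Measure ℝ} [SFinite μ] {κ η : Measure E} [SFinite κ] [SFinite η]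
    {w : ℝ × E → ℝ × E → ℝ≥0∞} (hw : Measurable (Function.uncurry w))
    (hper : ∀ x y, w x (y.1 + T, y.2) = w x y) :
    ∫⁻ x, ∫⁻ y, w x y * ENNReal.ofReal (Real.exp (-sqDist x y * t)) ∂(volume.prod η) ∂(μ.prod κ) =
      ∫⁻ x', ∫⁻ y', (∫⁻ x₁, (∫⁻ y₁ in Set.Ioo a (a + T), w (x₁, x') (y₁, y') *
          ENNReal.ofReal (∑' k : ℤ, Real.exp (-(x₁ - y₁ + k * T) ^ 2 * t))) ∂μ) *
        ENNReal.ofReal (Real.exp (-‖x' - y'‖ ^ 2 * t)) ∂η ∂κ := by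
  have hdist := measurable_sqDist (E := E)
  rw [lintegral_prod_lintegral_prod_symm (hw.mul (by fun_prop))]
  simp only [ofReal_exp_neg_sqDist_mul, ← mul_assoc,
    lintegral_mul_const' _ _ ENNReal.ofReal_ne_top]
  refine lintegral_congr fun x' => lintegral_congr fun y' => ?_
  congr 1
  refine lintegral_congr fun x₁ => ?_
  exact lintegral_mul_gaussian_eq_setLIntegral_periodized ht hT a x₁
    (hw.of_uncurry_left.comp measurable_prodMk_right) fun y₁ => hper (x₁, x') (y₁, y')

end Gaussian

section Gagliardo

variable {E : Type*} [NormedAddCommGroup E]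

lemma eq_of_sqDist_eq_zero {x y : ℝ × E} (h : sqDist x y = 0) : x = y := by
  obtain ⟨h₁, h₂⟩ := (add_eq_zero_iff_of_nonneg (sq_nonneg _) (sq_nonneg _)).1 h
  exact Prod.ext (sub_eq_zero.1 (sq_eq_zero_iff.1 h₁))
    (sub_eq_zero.1 (norm_eq_zero.1 (sq_eq_zero_iff.1 h₂)))

theorem stmt_18_general [MeasurableSpace E] [BorelSpace E] [SecondCountableTopology E]
    {F : Type*} [SeminormedAddCommGroup F] (κ : Measure E) [SFinite κ] {T α p : ℝ} (hT : 0 < T)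
    (a : ℝ) (hα : 0 < α) (hp : 0 < p) {u : ℝ × E → F} (hu : StronglyMeasurable u)
    (huper : ∀ x : ℝ × E, u (x.1 + T, x.2) = u x) :
    ∫⁻ x in {x : ℝ × E | x.1 ∈ Set.Ioo a (a + T)}, ∫⁻ y : ℝ × E,
        ENNReal.ofReal (‖u x - u y‖ ^ p / √(sqDist x y) ^ α)
          ∂(volume.prod κ) ∂(volume.prod κ) =
      ENNReal.ofReal (1 / Real.Gamma (α / 2)) *
        ∫⁻ t in Set.Ioi (0 : ℝ), ENNReal.ofReal (t ^ (α / 2 - 1)) *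
          ∫⁻ x', ∫⁻ y', (∫⁻ x₁ in Set.Ioo a (a + T), ∫⁻ y₁ in Set.Ioo a (a + T),
            ENNReal.ofReal (‖u (x₁, x') - u (y₁, y')‖ ^ p *
              ∑' k : ℤ, Real.exp (-(x₁ - y₁ + k * T) ^ 2 * t))) *
            ENNReal.ofReal (Real.exp (-‖x' - y'‖ ^ 2 * t)) ∂κ ∂κ := by
  let w (x y : ℝ × E) : ℝ≥0∞ := ENNReal.ofReal (‖u x - u y‖ ^ p)
  have hw : Measurable (Function.uncurry w) :=
    (((hu.comp_measurable measurable_fst).sub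
      (hu.comp_measurable measurable_snd)).norm.measurable.pow_const p).ennreal_ofReal
  have hrestrict : (volume.prod κ).restrict {x : ℝ × E | x.1 ∈ Set.Ioo a (a + T)} =
      (volume.restrict (Set.Ioo a (a + T))).prod κ := by
    rw [Measure.restrict_prod_eq_prod_univ, Set.prod_univ, Set.preimage]
  have hlaplace (x y : ℝ × E) := ofReal_div_sqrt_rpow_eq_laplace hα (sqDist_nonneg x y)
    (c := ‖u x - u y‖ ^ p) (by positivity)
    fun h => by simp [eq_of_sqDist_eq_zero h, Real.zero_rpow hp.ne']
  simp only [hrestrict, hlaplace, lintegral_const_mul' _ _ ENNReal.ofReal_ne_top]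
  congr 1
  rw [lintegral_lintegral_rpow_mul_gaussian_swap _ hw]
  refine setLIntegral_congr_fun measurableSet_Ioi fun t ht => ?_
  congr 1
  rw [lintegral_prod_mul_gaussian_eq_lintegral_periodized ht hT a hw
    fun x y => by simp only [w, huper]]
  simp only [w, ← ENNReal.ofReal_mul (Real.rpow_nonneg (norm_nonneg _) p)]

end Gagliardo

theorem stmt_18 (m : ℕ) (s p : ℝ) (hs0 : 0 < s) (hs1 : s < 1) (hp : 1 ≤ p)
    (u : ℝ × EuclideanSpace ℝ (Fin m) → ℝ) (hu : Measurable u)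
    (huper : ∀ x : ℝ × EuclideanSpace ℝ (Fin m), u (x.1 + 2 * π, x.2) = u x) :
    gagP m s p u =
      ENNReal.ofReal (1 / Real.Gamma (((m : ℝ) + 1 + s * p) / 2)) *
        ∫⁻ t in Set.Ioi (0 : ℝ),
          ENNReal.ofReal (t ^ ((((m : ℝ) + 1 + s * p) / 2) - 1)) *
            ∫⁻ x' : EuclideanSpace ℝ (Fin m), ∫⁻ y' : EuclideanSpace ℝ (Fin m),
              (∫⁻ x₁ in Set.Ioo (-π) π, ∫⁻ y₁ in Set.Ioo (-π) π,
                ENNReal.ofReal (|u (x₁, x') - u (y₁, y')| ^ p *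
                  ∑' k : ℤ, Real.exp (-(x₁ - y₁ + 2 * (k : ℝ) * π) ^ 2 * t))) *
                ENNReal.ofReal (Real.exp (-‖x' - y'‖ ^ 2 * t)) := by
  simpa only [gagP, Measure.volume_eq_prod, sqDist, Real.norm_eq_abs, show -π + 2 * π = π by ring,
    show ∀ k : ℝ, k * (2 * π) = 2 * k * π from fun k => by ring] using
    stmt_18_general (α := m + 1 + s * p) volume two_pi_pos (-π) (by positivity) (by positivity)
      hu.stronglyMeasurable huper
end

section
/- Let J₊ : ℝ → [0,∞) be a convex, nondecreasing function with J₊(t) = 0 for all t ≤ 0. Fix M > 0 and define F_M(φ, v) := J₊(φ + M − v) − J₊(φ) − J₊(M − v) for φ ≥ 0 and 0 ≤ v ≤ M; then F_M ≥ 0. Let g : ℝ → [0,∞) be a measurable 2π-periodic function with g ∈ L¹(−π,π) and g = g^{*per}. Then for every pair of measurable functions φ : (−π,π) → [0,∞) and v : (−π,π) → [0,M] such that ∫_{−π}^{π}∫_{−π}^{π} F_M(φ(x), v(y)) g(x−y) dx dy is finite, one has ∫_{−π}^{π}∫_{−π}^{π} F_M(φ^{*}(x), v^{*}(y)) g(x−y)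 dx dy ≤ ∫_{−π}^{π}∫_{−π}^{π} F_M(φ(x), v(y)) g(x−y) dx dy. -/
open MeasureTheory Real

/-- For a measurable set `A ⊂ ℝ` of finite measure, `A^* := (−|A|/2, |A|/2)`. -/
noncomputable def symmSet (A : Set ℝ) : Set ℝ :=
  Set.Ioo (-((volume A).toReal / 2)) ((volume A).toReal / 2)

/-- Symmetric decreasing rearrangement of a (nonnegative) function on `(−π,π)`:
`u^*(x) := ∫₀^∞ χ_{{u>t}^*}(x) dt`. -/
noncomputable def symmRearr (u : ℝ → ℝ) : ℝ → ℝ := fun x =>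
  ∫ t in Set.Ioi (0 : ℝ),
    (symmSet {y | y ∈ Set.Ioo (-π) π ∧ t < u y}).indicator (fun _ => (1 : ℝ)) x

/-- The `2π`-periodic extension of (the restriction to `[−π,π)` of) a function. -/
noncomputable def periodize (f : ℝ → ℝ) : ℝ → ℝ := fun x =>
  f (x - 2 * π * (⌊(x + π) / (2 * π)⌋ : ℝ))

/-- The periodic rearrangement `f^{*per}`: the `2π`-periodic extension of `(f·χ_{(−π,π)})^*`. -/
noncomputable def perRearr (f : ℝ → ℝ) : ℝ → ℝ := periodize (symmRearr f)
/-- `F_M(φ, v) := J₊(φ + M − v) − J₊(φ) − J₊(M − v)`. -/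
noncomputable def FM (J : ℝ → ℝ) (M φ v : ℝ) : ℝ := J (φ + M - v) - J φ - J (M - v)

/-!
Layer-cake decompositions in `φ`, in the derivative of `F_M(·, v)` and in `g` reduce the inequality
to superlevel sets `A` of `φ`, `B` of `v` and an arc `G`, a superlevel set of `g`. That derivative
is decreasing in `v`, so `A` is paired with the complement of `B`, and the inequality becomes the
Riesz inequality on the circle: `∬ χ_A(x) χ_B(y) χ_G(x - y)` does not decrease when `A` and `B` are
replaced by `A^*` and `B^*`.

To prove the latter, let `k` be the length of `G` and `w(x)` the mass of `B` in the window of length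
`k` centered at `x`. For every level `t` we have `∫_A w ≤ t |A| + ∫ (w - t)⁺`, and `∫ (w - t)⁺` is a
convex function of `k`, which bounds it by `(|B| - t) (k - t)`. Centered arcs attain the resulting
bound for a suitable `t`.
-/

open Set

lemma nonpos_of_midpoint_convex {f : ℝ → ℝ} {p q : ℝ} (hf : ContinuousOn f (Icc p q))
    (hmid : ∀ x ∈ Icc p q, ∀ y ∈ Icc p q, 2 * f ((x + y) / 2) ≤ f x + f y)
    (hp : f p ≤ 0) (hq : f q ≤ 0) {x : ℝ} (hx : x ∈ Icc p q) : f x ≤ 0 := by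
  by_contra! hpos
  obtain ⟨m, hm, hmax⟩ := isCompact_Icc.exists_isMaxOn ⟨x, hx⟩ hf
  have hmpos : 0 < f m := hpos.trans_le (hmax hx)
  have hcompact : IsCompact (Icc p q ∩ f ⁻¹' {f m}) :=
    isCompact_Icc.of_isClosed_subset (hf.preimage_isClosed_of_isClosed isClosed_Icc
      isClosed_singleton) inter_subset_left
  obtain ⟨z, ⟨⟨hpz, hzq⟩, hfz⟩, hleast⟩ := hcompact.exists_isLeast ⟨m, hm, rfl⟩
  rw [mem_preimage, mem_singleton_iff] at hfz
  have hpz' : p < z := hpz.lt_of_ne fun h => by subst h; linarith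
  have hzq' : z < q := hzq.lt_of_ne fun h => by subst h; linarith
  obtain ⟨h, hh, hhz⟩ := exists_between (lt_min (sub_pos.2 hpz') (sub_pos.2 hzq'))
  rw [lt_min_iff] at hhz
  have hl : z - h ∈ Icc p q := ⟨by linarith, by linarith⟩
  have hr : z + h ∈ Icc p q := ⟨by linarith, by linarith⟩
  have hz_mid := hmid _ hl _ hr
  rw [show (z - h + (z + h)) / 2 = z by ring] at hz_mid
  have hfl : f (z - h) ≤ f m := hmax hl
  have hfr : f (z + h) ≤ f m := hmax hr
  have : z ≤ z - h := hleast ⟨hl, by rw [mem_preimage, mem_singleton_iff]; linarith⟩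
  linarith

/-- `P` is the distribution function of an `L`-periodic density with values in `[0, 1]` and total
mass `c` over a period. -/
structure IsPeriodicCDF (P : ℝ → ℝ) (L c : ℝ) : Prop where
  monotone : Monotone P
  sub_le : ∀ ⦃x y : ℝ⦄, x ≤ y → P y - P x ≤ y - x
  add_period : ∀ x, P (x + L) = P x + c

/-- The integral over a period of `(P (x + k) - P x - t)⁺`: the amount by which the masses of
the windows of length `k` exceed the level `t`. -/
noncomputable def windowExcess (P : ℝ → ℝ) (L t k : ℝ) : ℝ :=
  ∫ x in (0 : ℝ)..L, max (P (x + k) - P x - t) 0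

namespace IsPeriodicCDF

variable {P : ℝ → ℝ} {L c : ℝ}

lemma continuous (hP : IsPeriodicCDF P L c) : Continuous P := by
  refine (LipschitzWith.of_le_add fun x y => ?_).continuous
  rcases le_total x y with hxy | hxy
  · linarith [hP.monotone hxy, dist_nonneg (x := x) (y := y)]
  · rw [Real.dist_eq, abs_of_nonneg (sub_nonneg.2 hxy)]
    linarith [hP.sub_le hxy]

lemma le_sub (hP : IsPeriodicCDF P L c) {x y : ℝ} (hyx : y ≤ x + L) :
    y - x - (L - c) ≤ P y - P x := by
  have := hP.sub_le hyx
  rw [hP.add_period] at this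
  linarith

lemma integral_window (hP : IsPeriodicCDF P L c) (k : ℝ) :
    ∫ x in (0 : ℝ)..L, (P (x + k) - P x) = k * c := by
  have hint : ∀ a b, IntervalIntegrable P volume a b := hP.continuous.intervalIntegrable
  have hshift : ∫ x in L..(L + k), P x = (∫ x in (0 : ℝ)..k, P x) + k * c := by
    calc ∫ x in L..(L + k), P x = ∫ x in (0 : ℝ)..k, P (x + L) := by
          rw [intervalIntegral.integral_comp_add_right, zero_add, add_comm k]
      _ = ∫ x in (0 : ℝ)..k, (P x + c) := by simp only [hP.add_period]
      _ = (∫ x in (0 : ℝ)..k, P x) + k * c := by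
          rw [intervalIntegral.integral_add (hint _ _) intervalIntegrable_const]
          simp
  have hcont := hP.continuous
  rw [intervalIntegral.integral_sub (Continuous.intervalIntegrable (by fun_prop) _ _) (hint _ _),
    intervalIntegral.integral_comp_add_right, zero_add,
    intervalIntegral.integral_interval_sub_interval_comm (hint _ _) (hint _ _) (hint _ _),
    intervalIntegral.integral_symm 0 k, intervalIntegral.integral_symm L (L + k), hshift]
  ring

lemma integral_comp_window (hP : IsPeriodicCDF P L c) (F : ℝ → ℝ) (p q u : ℝ) :
    ∫ x in u..(u + L), F (P (x + q) - P (x - p)) =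
      ∫ x in (0 : ℝ)..L, F (P (x + (p + q)) - P x) := by
  have hper : Function.Periodic (fun x => F (P (x + (p + q)) - P x)) L := fun x => by
    simp only [add_right_comm x L, hP.add_period, add_sub_add_right_eq_sub]
  calc ∫ x in u..(u + L), F (P (x + q) - P (x - p))
      = ∫ x in u..(u + L), F (P (x - p + (p + q)) - P (x - p)) := by
        simp only [← add_assoc, sub_add_cancel]
    _ = ∫ x in (u - p)..(u - p + L), F (P (x + (p + q)) - P x) := by
        rw [intervalIntegral.integral_comp_sub_right (fun x => F (P (x + (p + q)) - P x)),
          add_sub_right_comm]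
    _ = ∫ x in (0 : ℝ)..L, F (P (x + (p + q)) - P x) := by
        rw [hper.intervalIntegral_add_eq _ 0, zero_add]

lemma integral_max_window (hP : IsPeriodicCDF P L c) (t p q u : ℝ) :
    ∫ x in u..(u + L), max (P (x + q) - P (x - p) - t) 0 = windowExcess P L t (p + q) :=
  hP.integral_comp_window (fun z => max (z - t) 0) p q u

lemma continuous_windowExcess (hP : IsPeriodicCDF P L c) (t : ℝ) :
    Continuous (windowExcess P L t) := by
  have := hP.continuous
  exact intervalIntegral.continuous_parametric_intervalIntegral_of_continuous' (by fun_prop) _ _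

lemma two_mul_windowExcess_le (hP : IsPeriodicCDF P L c) (hL : 0 ≤ L) (t k : ℝ) {h : ℝ}
    (hh : 0 ≤ h) :
    2 * windowExcess P L t k ≤ windowExcess P L t (k - h) + windowExcess P L t (k + h) := by
  let e (p q x : ℝ) : ℝ := max (P (x + q) - P (x - p) - t) 0
  have hint : ∀ p q, IntervalIntegrable (e p q) volume 0 L := fun p q => by
    have := hP.continuous
    exact Continuous.intervalIntegrable (by fun_prop) _ _
  have hexcess : ∀ p q, ∫ x in (0 : ℝ)..L, e p q x = windowExcess P L t (p + q) := fun p q => by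
    simpa only [zero_add] using hP.integral_max_window t p q 0
  -- The inner windows `[x - k, x]`, `[x - (k - h), x + h]` have the same total mass as the
  -- outer pair `[x - (k - h), x] ⊆ [x - k, x + h]`, so convexity of `(· - t)⁺` compares them.
  have hpointwise : ∀ x, e k 0 x + e (k - h) h x ≤ e (k - h) 0 x + e k h x := fun x => by
    have hleft : P (x - k) ≤ P (x - (k - h)) := hP.monotone (by linarith)
    have hright : P x ≤ P (x + h) := hP.monotone (by linarith)
    simp only [e, add_zero]
    grind
  calc 2 * windowExcess P L t k
      = ∫ x in (0 : ℝ)..L, (e k 0 x + e (k - h) h x) := by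
        rw [intervalIntegral.integral_add (hint _ _) (hint _ _), hexcess, hexcess,
          sub_add_cancel, add_zero, two_mul]
    _ ≤ ∫ x in (0 : ℝ)..L, (e (k - h) 0 x + e k h x) :=
        intervalIntegral.integral_mono_on hL ((hint _ _).add (hint _ _))
          ((hint _ _).add (hint _ _)) fun x _ => hpointwise x
    _ = windowExcess P L t (k - h) + windowExcess P L t (k + h) := by
        rw [intervalIntegral.integral_add (hint _ _) (hint _ _), hexcess, hexcess, add_zero]

lemma windowExcess_self (hP : IsPeriodicCDF P L c) {t : ℝ} (ht : 0 ≤ t) :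
    windowExcess P L t t = 0 := by
  have hzero : ∀ x, max (P (x + t) - P x - t) 0 = 0 := fun x =>
    max_eq_right (by linarith [hP.sub_le (le_add_of_nonneg_right ht : x ≤ x + t)])
  simp [windowExcess, hzero]

lemma windowExcess_of_le (hP : IsPeriodicCDF P L c) {t k : ℝ} (hkL : k ≤ L) (htk : t ≤ k + c - L) :
    windowExcess P L t k = k * c - t * L := by
  have hmax : ∀ x, max (P (x + k) - P x - t) 0 = P (x + k) - P x - t := fun x =>
    max_eq_left (by linarith [hP.le_sub (by linarith : x + k ≤ x + L)])
  have := hP.continuous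
  simp only [windowExcess, hmax]
  rw [intervalIntegral.integral_sub (Continuous.intervalIntegrable (by fun_prop) _ _)
    intervalIntegrable_const, hP.integral_window]
  simp [mul_comm]

/-- A continuous form of Pollard's theorem on sumsets: as a function of `k` the left-hand side is
convex, and the right-hand side is its chord between the two trivial cases `k = t` and
`k = L - c + t`. -/
theorem windowExcess_le (hP : IsPeriodicCDF P L c) {t k : ℝ} (ht : 0 ≤ t) (htc : t ≤ c)
    (htk : t ≤ k) (hkt : k + c - L ≤ t) : windowExcess P L t k ≤ (c - t) * (k - t) := by
  have hL : 0 ≤ L := by linarith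
  have hdiff : windowExcess P L t k - (c - t) * (k - t) ≤ 0 := by
    refine nonpos_of_midpoint_convex (f := fun k => windowExcess P L t k - (c - t) * (k - t))
      (p := t) (q := L - c + t) ?_ ?_ ?_ ?_ ⟨htk, by linarith⟩
    · exact ((hP.continuous_windowExcess t).sub (by fun_prop)).continuousOn
    · intro x _ y _
      wlog hxy : x ≤ y generalizing x y
      · rw [add_comm x, add_comm (_ - _)]
        exact this y ‹_› x ‹_› (le_of_not_ge hxy)
      have := hP.two_mul_windowExcess_le hL t ((x + y) / 2) (h := (y - x) / 2) (by linarith)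
      rw [show (x + y) / 2 - (y - x) / 2 = x by ring,
        show (x + y) / 2 + (y - x) / 2 = y by ring] at this
      linarith
    · simp [hP.windowExcess_self ht]
    · rw [hP.windowExcess_of_le (by linarith) (by linarith)]
      exact le_of_eq (by ring)
  linarith

lemma setIntegral_window_le (hP : IsPeriodicCDF P L c) {t k u : ℝ} {A : Set ℝ}
    (hA : A ⊆ Ioc u (u + L)) (ht : 0 ≤ t) (htc : t ≤ c) (htk : t ≤ k) (hkt : k + c - L ≤ t) :
    ∫ x in A, (P (x + k / 2) - P (x - k / 2)) ≤ t * volume.real A + (c - t) * (k - t) := by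
  have hcont := hP.continuous
  let e (x : ℝ) : ℝ := max (P (x + k / 2) - P (x - k / 2) - t) 0
  have hint : ∀ {f : ℝ → ℝ}, Continuous f → IntegrableOn f (Ioc u (u + L)) := fun hf =>
    (hf.integrableOn_Icc).mono_set Ioc_subset_Icc_self
  have he : IntegrableOn e (Ioc u (u + L)) := hint (by fun_prop)
  have huL : u ≤ u + L := by linarith
  calc ∫ x in A, (P (x + k / 2) - P (x - k / 2)) ≤ ∫ x in A, (t + e x) :=
        setIntegral_mono ((hint (by fun_prop)).mono_set hA)
          ((hint continuous_const).mono_set hA |>.add (he.mono_set hA))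
          fun x => by simp only [e]; linarith [le_max_left (P (x + k / 2) - P (x - k / 2) - t) 0]
    _ = t * volume.real A + ∫ x in A, e x := by
        rw [integral_add ((hint continuous_const).mono_set hA) (he.mono_set hA),
          setIntegral_const, smul_eq_mul, mul_comm]
    _ ≤ t * volume.real A + ∫ x in Ioc u (u + L), e x := by
        gcongr t * volume.real A + ?_
        exact setIntegral_mono_set he (ae_of_all _ fun x => le_max_right _ _) hA.eventuallyLE
    _ = t * volume.real A + windowExcess P L t k := by
        rw [← intervalIntegral.integral_of_le huL, hP.integral_max_window, add_halves]
    _ ≤ t * volume.real A + (c - t) * (k - t) := by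
        gcongr
        exact hP.windowExcess_le ht htc htk hkt

end IsPeriodicCDF

/-- A distribution function of the indicator of `(-b / 2, b / 2)`. -/
noncomputable def arcCDF (b x : ℝ) : ℝ := max (-(b / 2)) (min x (b / 2))

lemma continuous_arcCDF (b : ℝ) : Continuous (arcCDF b) := by
  unfold arcCDF
  fun_prop

lemma integral_arcCDF_window {a b k : ℝ} (hb : 0 ≤ b) (hk : 0 ≤ k) (hbk : b + k ≤ a) :
    ∫ x in (-(a / 2))..(a / 2), (arcCDF b (x + k / 2) - arcCDF b (x - k / 2)) = b * k := by
  have hcont := continuous_arcCDF b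
  have hint : ∀ p q, IntervalIntegrable (arcCDF b) volume p q := hcont.intervalIntegrable
  have hright : ∫ x in (a / 2 - k / 2)..(a / 2 + k / 2), arcCDF b x = k * (b / 2) := by
    rw [intervalIntegral.integral_congr (g := fun _ => b / 2) fun x hx => ?_,
      intervalIntegral.integral_const, smul_eq_mul]
    · ring
    · rw [uIcc_of_le (by linarith)] at hx
      simp only [arcCDF]
      grind
  have hleft : ∫ x in (-(a / 2) - k / 2)..(-(a / 2) + k / 2), arcCDF b x = k * (-(b / 2)) := by
    rw [intervalIntegral.integral_congr (g := fun _ => -(b / 2)) fun x hx => ?_,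
      intervalIntegral.integral_const, smul_eq_mul]
    · ring
    · rw [uIcc_of_le (by linarith)] at hx
      simp only [arcCDF]
      grind
  rw [intervalIntegral.integral_sub (Continuous.intervalIntegrable (by fun_prop) _ _)
      (Continuous.intervalIntegrable (by fun_prop) _ _),
    intervalIntegral.integral_comp_add_right, intervalIntegral.integral_comp_sub_right,
    intervalIntegral.integral_interval_sub_interval_comm' (hint _ _) (hint _ _) (hint _ _),
    hright, hleft]
  ring

lemma add_arcCDF_window_le_max {b k t : ℝ} (ht : 0 ≤ t) (htb : t ≤ b) (htk : t ≤ k) (x : ℝ) :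
    t + (arcCDF (b - t) (x + (k - t) / 2) - arcCDF (b - t) (x - (k - t) / 2)) ≤
      max t (arcCDF b (x + k / 2) - arcCDF b (x - k / 2)) := by
  simp only [arcCDF]
  grind

/-- The level at which the bound `IsPeriodicCDF.setIntegral_window_le` is attained by centered
arcs of lengths `a` and `b`. -/
lemma exists_extremal_level {a b k L : ℝ} (hb : 0 ≤ b) (hbL : b ≤ L) (hk : 0 ≤ k) (hkL : k ≤ L) :
    ∃ t, 0 ≤ t ∧ t ≤ b ∧ t ≤ k ∧ k + b - L ≤ t ∧
      (b - t + (k - t) ≤ a ∨ (b - t) * (k - t) = 0) ∧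
      (2 * t ≤ b + k - a ∨ t = 0 ∨ t = k + b - L) := by
  have hlow : max 0 (k + b - L) ≤ min b k :=
    max_le (le_min hb hk) (le_min (by linarith) (by linarith))
  rcases le_total ((b + k - a) / 2) (max 0 (k + b - L)) with hmid | hmid
  · exact ⟨max 0 (k + b - L), le_max_left _ _, hlow.trans (min_le_left _ _),
      hlow.trans (min_le_right _ _), le_max_right _ _, .inl (by linarith), .inr (max_choice _ _)⟩
  rcases le_total ((b + k - a) / 2) (min b k) with hmid' | hmid'
  · exact ⟨(b + k - a) / 2, (le_max_left _ _).trans hmid, hmid'.trans (min_le_left _ _),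
      hmid'.trans (min_le_right _ _), (le_max_right _ _).trans hmid, .inl (by linarith),
      .inl (by linarith)⟩
  · refine ⟨min b k, le_min hb hk, min_le_left _ _, min_le_right _ _,
      (le_max_right _ _).trans hlow, .inr ?_, .inl (by linarith)⟩
    rcases min_choice b k with h | h <;> simp [h]

namespace IsPeriodicCDF

variable {P : ℝ → ℝ} {L b : ℝ}

lemma arcCDF_sub_le (hP : IsPeriodicCDF P L b) (hb : 0 ≤ b) (hfull : P (b / 2) - P (-(b / 2)) = b)
    {x y : ℝ} (hxy : x ≤ y) : arcCDF b y - arcCDF b x ≤ P y - P x := by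
  have hinner : ∀ {p q : ℝ}, -(b / 2) ≤ p → q ≤ b / 2 → q - p ≤ P q - P p :=
    fun hp hq => by linarith [hP.sub_le hp, hP.sub_le hq]
  have hclamp : arcCDF b y - arcCDF b x ≤ P (arcCDF b y) - P (arcCDF b x) :=
    hinner (le_max_left _ _) (max_le (by linarith) (min_le_right _ _))
  have hmono := hP.monotone hxy
  rcases le_or_gt y (-(b / 2)) with hy | hy
  · have : ∀ z ≤ y, arcCDF b z = -(b / 2) := fun z hz =>
      max_eq_left (min_le_of_left_le (hz.trans hy))
    linarith [this x hxy, this y le_rfl]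
  rcases le_or_gt (b / 2) x with hx | hx
  · have : ∀ z ≥ x, arcCDF b z = b / 2 := fun z hz => by
      rw [arcCDF, min_eq_right (hx.trans hz), max_eq_right (by linarith)]
    linarith [this x le_rfl, this y hxy]
  have hx' : x ≤ arcCDF b x := le_max_of_le_right (le_min le_rfl hx.le)
  have hy' : arcCDF b y ≤ y := max_le hy.le (min_le_left _ _)
  linarith [hP.monotone hx', hP.monotone hy']

lemma le_arc_window (hP : IsPeriodicCDF P L b) (hb : 0 ≤ b)
    (hfull : P (b / 2) - P (-(b / 2)) = b) {a k t x : ℝ} (hk : 0 ≤ k) (hkL : k ≤ L)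
    (htb : t ≤ b) (htk : t ≤ k) (ht : 2 * t ≤ b + k - a ∨ t = 0 ∨ t = k + b - L)
    (hx : x ∈ Icc (-(a / 2)) (a / 2)) : t ≤ P (x + k / 2) - P (x - k / 2) := by
  have hwindow : x - k / 2 ≤ x + k / 2 := by linarith
  rcases ht with ht | rfl | rfl
  · refine le_trans ?_ (hP.arcCDF_sub_le hb hfull hwindow)
    simp only [arcCDF]
    grind
  · exact sub_nonneg.2 (hP.monotone hwindow)
  · linarith [hP.le_sub (by linarith : x + k / 2 ≤ x - k / 2 + L)]

lemma le_integral_arc_window (hP : IsPeriodicCDF P L b)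
    (hfull : P (b / 2) - P (-(b / 2)) = b) {a k t : ℝ} (ha : 0 ≤ a) (hkL : k ≤ L)
    (ht : 0 ≤ t) (htb : t ≤ b) (htk : t ≤ k)
    (hprod : b - t + (k - t) ≤ a ∨ (b - t) * (k - t) = 0)
    (hlevel : 2 * t ≤ b + k - a ∨ t = 0 ∨ t = k + b - L) :
    t * a + (b - t) * (k - t) ≤
      ∫ x in (-(a / 2))..(a / 2), (P (x + k / 2) - P (x - k / 2)) := by
  have hcont := hP.continuous
  have hb : 0 ≤ b := ht.trans htb
  have hk : 0 ≤ k := ht.trans htk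
  have hta : t * a = ∫ _ in (-(a / 2))..(a / 2), t := by
    rw [intervalIntegral.integral_const, smul_eq_mul]
    ring
  have hle : ∀ x ∈ Icc (-(a / 2)) (a / 2), t ≤ P (x + k / 2) - P (x - k / 2) := fun x hx =>
    hP.le_arc_window hb hfull hk hkL htb htk hlevel hx
  rcases hprod with hsum | hzero
  · have hcont' := continuous_arcCDF (b - t)
    rw [hta, ← integral_arcCDF_window (sub_nonneg.2 htb) (sub_nonneg.2 htk) hsum,
      ← intervalIntegral.integral_add intervalIntegrable_const
        (Continuous.intervalIntegrable (by fun_prop) _ _)]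
    refine intervalIntegral.integral_mono_on (by linarith)
      (Continuous.intervalIntegrable (by fun_prop) _ _)
      (Continuous.intervalIntegrable (by fun_prop) _ _) fun x hx => ?_
    exact (add_arcCDF_window_le_max ht htb htk x).trans
      (max_le (hle x hx) (hP.arcCDF_sub_le hb hfull (by linarith)))
  · rw [hzero, add_zero, hta]
    exact intervalIntegral.integral_mono_on (by linarith) intervalIntegrable_const
      (Continuous.intervalIntegrable (by fun_prop) _ _) hle

theorem setIntegral_window_le_arc {Q : ℝ → ℝ} (hQ : IsPeriodicCDF Q L b)
    (hP : IsPeriodicCDF P L b) (hfull : P (b / 2) - P (-(b / 2)) = b) (hb : 0 ≤ b) (hbL : b ≤ L)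
    {k u : ℝ} (hk : 0 ≤ k) (hkL : k ≤ L) {A : Set ℝ} (hA : A ⊆ Ioc u (u + L)) :
    ∫ x in A, (Q (x + k / 2) - Q (x - k / 2)) ≤
      ∫ x in (-(volume.real A / 2))..(volume.real A / 2), (P (x + k / 2) - P (x - k / 2)) := by
  obtain ⟨t, ht, htb, htk, hkt, hprod, hlevel⟩ :=
    exists_extremal_level (a := volume.real A) hb hbL hk hkL
  exact (hQ.setIntegral_window_le hA ht htb htk hkt).trans
    (hP.le_integral_arc_window hfull measureReal_nonneg hkL ht htb htk hprod hlevel)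

end IsPeriodicCDF

lemma periodize_apply (f : ℝ → ℝ) (x : ℝ) :
    periodize f x = f (toIcoMod two_pi_pos (-π) x) := by
  rw [periodize, toIcoMod, toIcoDiv_eq_floor, sub_neg_eq_add, zsmul_eq_mul, mul_comm]

lemma periodize_periodic (f : ℝ → ℝ) : Function.Periodic (periodize f) (2 * π) := fun x => by
  simp only [periodize_apply, toIcoMod_add_right]

lemma periodize_of_mem {f : ℝ → ℝ} {x : ℝ} (hx : x ∈ Ioo (-π) π) : periodize f x = f x := by
  rw [periodize_apply, (toIcoMod_eq_self two_pi_pos).2 ⟨hx.1.le, by linarith [hx.2]⟩]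

lemma measurable_periodize {f : ℝ → ℝ} (hf : Measurable f) : Measurable (periodize f) := by
  unfold periodize
  fun_prop

lemma intervalIntegrable_of_mem_Icc {f : ℝ → ℝ} (hf : Measurable f)
    (hmem : ∀ x, f x ∈ Icc 0 1) (a b : ℝ) : IntervalIntegrable f volume a b :=
  (intervalIntegrable_const (c := (1 : ℝ))).mono_fun hf.aestronglyMeasurable <|
    ae_of_all _ fun x => by simpa [abs_of_nonneg (hmem x).1] using (hmem x).2

lemma isPeriodicCDF_integral {γ : ℝ → ℝ} {L : ℝ} (hγ : Measurable γ) (hper : Function.Periodic γ L)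
    (hmem : ∀ x, γ x ∈ Icc 0 1) :
    IsPeriodicCDF (fun x => ∫ y in (0 : ℝ)..x, γ y) L (∫ y in (0 : ℝ)..L, γ y) := by
  have hint := intervalIntegrable_of_mem_Icc hγ hmem
  refine ⟨fun x y hxy => ?_, fun x y hxy => ?_, fun x => ?_⟩
  · rw [← sub_nonneg, intervalIntegral.integral_interval_sub_left (hint _ _) (hint _ _)]
    exact intervalIntegral.integral_nonneg hxy fun z _ => (hmem z).1
  · rw [intervalIntegral.integral_interval_sub_left (hint _ _) (hint _ _)]
    simpa using intervalIntegral.integral_mono_on hxy (hint x y)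
      (intervalIntegrable_const (c := (1 : ℝ))) fun z _ => (hmem z).2
  · rw [← intervalIntegral.integral_add_adjacent_intervals (hint 0 x) (hint x (x + L)),
      hper.intervalIntegral_add_eq x 0, zero_add]

/-- The distribution function of the `2π`-periodic extension of `A ⊆ (-π, π)`. -/
noncomputable def periodicCDF (A : Set ℝ) (x : ℝ) : ℝ :=
  ∫ y in (0 : ℝ)..x, periodize (A.indicator 1) y

/-- The mass which the `2π`-periodic extension of `A ⊆ (-π, π)` has in the window of length `k`
centered at `x`. -/
noncomputable def windowMass (A : Set ℝ) (k x : ℝ) : ℝ :=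
  periodicCDF A (x + k / 2) - periodicCDF A (x - k / 2)

lemma periodize_indicator_mem_Icc (A : Set ℝ) (x : ℝ) :
    periodize (A.indicator 1) x ∈ Icc 0 1 :=
  ⟨indicator_nonneg (fun _ _ => zero_le_one) _, indicator_le_self' (fun _ _ => zero_le_one) _⟩

lemma intervalIntegrable_periodize_indicator {A : Set ℝ} (hA : MeasurableSet A) (a b : ℝ) :
    IntervalIntegrable (periodize (A.indicator 1)) volume a b :=
  intervalIntegrable_of_mem_Icc (measurable_periodize (measurable_one.indicator hA))
    (periodize_indicator_mem_Icc A) a b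

lemma periodicCDF_sub {A : Set ℝ} (hA : MeasurableSet A) (x y : ℝ) :
    periodicCDF A y - periodicCDF A x = ∫ z in x..y, periodize (A.indicator 1) z :=
  intervalIntegral.integral_interval_sub_left (intervalIntegrable_periodize_indicator hA _ _)
    (intervalIntegrable_periodize_indicator hA _ _)

lemma periodicCDF_sub_of_subset {A : Set ℝ} (hA : MeasurableSet A) {a : ℝ}
    (hAa : A ⊆ Ioo (-a) a) (ha : 0 ≤ a) (haπ : a ≤ π) :
    periodicCDF A a - periodicCDF A (-a) = volume.real A := by
  rw [periodicCDF_sub hA, intervalIntegral.integral_of_le (by linarith),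
    integral_Ioc_eq_integral_Ioo,
    setIntegral_congr_fun measurableSet_Ioo fun x hx =>
      periodize_of_mem ⟨by linarith [hx.1], by linarith [hx.2]⟩,
    integral_indicator_one hA, measureReal_restrict_apply hA, inter_eq_left.2 hAa]

lemma isPeriodicCDF_periodicCDF {A : Set ℝ} (hA : MeasurableSet A) (hAπ : A ⊆ Ioo (-π) π) :
    IsPeriodicCDF (periodicCDF A) (2 * π) (volume.real A) := by
  have hmass : ∫ y in (0 : ℝ)..(2 * π), periodize (A.indicator 1) y = volume.real A := by
    rw [← periodicCDF_sub_of_subset hA hAπ pi_pos.le le_rfl, periodicCDF_sub hA,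
      ← zero_add (2 * π), (periodize_periodic _).intervalIntegral_add_eq 0 (-π)]
    congr 1
    ring
  rw [← hmass]
  exact isPeriodicCDF_integral (measurable_periodize (measurable_one.indicator hA))
    (periodize_periodic _) (periodize_indicator_mem_Icc A)

lemma windowMass_nonneg {A : Set ℝ} (hA : MeasurableSet A) (hAπ : A ⊆ Ioo (-π) π) {k : ℝ}
    (hk : 0 ≤ k) (x : ℝ) : 0 ≤ windowMass A k x :=
  sub_nonneg.2 ((isPeriodicCDF_periodicCDF hA hAπ).monotone (by linarith))

lemma continuous_windowMass {A : Set ℝ} (hA : MeasurableSet A) (hAπ : A ⊆ Ioo (-π) π) (k : ℝ) :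
    Continuous (windowMass A k) := by
  have := (isPeriodicCDF_periodicCDF hA hAπ).continuous
  unfold windowMass
  fun_prop

lemma windowMass_Ioo {k : ℝ} (hk : 0 ≤ k) (hkπ : k ≤ 2 * π) (x : ℝ) :
    windowMass (Ioo (-π) π) k x = k := by
  have hvol : volume.real (Ioo (-π) π) = 2 * π := by
    rw [Real.volume_real_Ioo_of_le (by linarith [pi_pos])]
    ring
  have hP := isPeriodicCDF_periodicCDF measurableSet_Ioo (Subset.refl (Ioo (-π) π))
  rw [hvol] at hP
  refine le_antisymm ?_ ?_
  · exact (hP.sub_le (by linarith)).trans_eq (by ring)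
  · exact (le_of_eq (by ring)).trans (hP.le_sub (by linarith : x + k / 2 ≤ x - k / 2 + 2 * π))

lemma mem_symmSet {A : Set ℝ} {x : ℝ} : x ∈ symmSet A ↔ 2 * |x| < volume.real A := by
  rw [symmSet, mem_Ioo, ← abs_lt, measureReal_def, lt_div_iff₀' two_pos]

lemma measurableSet_symmSet (A : Set ℝ) : MeasurableSet (symmSet A) := measurableSet_Ioo

lemma volume_real_symmSet (A : Set ℝ) : volume.real (symmSet A) = volume.real A := by
  have hA := measureReal_nonneg (μ := volume) (s := A)
  rw [symmSet, ← measureReal_def, Real.volume_real_Ioo_of_le (by linarith)]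
  ring

lemma volume_real_le_two_pi {A : Set ℝ} (hA : A ⊆ Ioo (-π) π) : volume.real A ≤ 2 * π := by
  refine (measureReal_mono hA measure_Ioo_lt_top.ne).trans_eq ?_
  rw [Real.volume_real_Ioo_of_le (by linarith [pi_pos])]
  ring

lemma symmSet_subset {A : Set ℝ} (hA : A ⊆ Ioo (-π) π) : symmSet A ⊆ Ioo (-π) π := by
  have := volume_real_le_two_pi hA
  exact Ioo_subset_Ioo (by rw [← measureReal_def]; linarith) (by rw [← measureReal_def]; linarith)

theorem setIntegral_windowMass_le {A B : Set ℝ} (hA : A ⊆ Ioo (-π) π) (hB : MeasurableSet B)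
    (hBπ : B ⊆ Ioo (-π) π) {k : ℝ} (hk : 0 ≤ k) (hkπ : k ≤ 2 * π) :
    ∫ x in A, windowMass B k x ≤ ∫ x in symmSet A, windowMass (symmSet B) k x := by
  have hP := isPeriodicCDF_periodicCDF (measurableSet_symmSet B) (symmSet_subset hBπ)
  have hfull := periodicCDF_sub_of_subset (measurableSet_symmSet B) (a := volume.real B / 2)
    Subset.rfl (by positivity) (by linarith [volume_real_le_two_pi hBπ])
  rw [volume_real_symmSet] at hP hfull
  have hAπ : A ⊆ Ioc (-π) (-π + 2 * π) := by
    rw [show -π + 2 * π = π by ring]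
    exact hA.trans Ioo_subset_Ioc_self
  have := (isPeriodicCDF_periodicCDF hB hBπ).setIntegral_window_le_arc hP hfull
    measureReal_nonneg (volume_real_le_two_pi hBπ) hk hkπ hAπ
  rwa [intervalIntegral.integral_of_le (by linarith [measureReal_nonneg (μ := volume) (s := A)]),
    integral_Ioc_eq_integral_Ioo] at this

lemma volume_real_inter_eq_integral_periodize {A S : Set ℝ} (hA : MeasurableSet A)
    (hAπ : A ⊆ Ioo (-π) π) (hS : MeasurableSet S) (hSper : ∀ y, y + 2 * π ∈ S ↔ y ∈ S) (u : ℝ) :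
    volume.real (A ∩ S) =
      ∫ y in Ioo u (u + 2 * π), S.indicator (periodize (A.indicator 1)) y := by
  have hper : Function.Periodic (S.indicator (periodize (A.indicator 1))) (2 * π) := fun y =>
    indicator_eq_indicator (hSper y) (periodize_periodic _ y)
  have hperiod : ∀ v, v ≤ v + 2 * π := fun v => by linarith [pi_pos]
  calc volume.real (A ∩ S) = ∫ y in Ioo (-π) π, (A ∩ S).indicator 1 y := by
        rw [integral_indicator_one (hA.inter hS), measureReal_restrict_apply (hA.inter hS),
          inter_eq_left.2 (inter_subset_left.trans hAπ)]
    _ = ∫ y in Ioo (-π) π, S.indicator (periodize (A.indicator 1)) y :=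
        setIntegral_congr_fun measurableSet_Ioo fun y hy => by
          rw [inter_comm, ← indicator_indicator]
          exact indicator_eq_indicator Iff.rfl (periodize_of_mem hy).symm
    _ = ∫ y in (-π)..(-π + 2 * π), S.indicator (periodize (A.indicator 1)) y := by
        rw [intervalIntegral.integral_of_le (hperiod _), integral_Ioc_eq_integral_Ioo,
          show -π + 2 * π = π by ring]
    _ = ∫ y in Ioo u (u + 2 * π), S.indicator (periodize (A.indicator 1)) y := by
        rw [hper.intervalIntegral_add_eq (-π) u, intervalIntegral.integral_of_le (hperiod _),
          integral_Ioc_eq_integral_Ioo]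

/-- `G` is almost everywhere the `2π`-periodic extension of the centered arc of length `k`. -/
structure IsPeriodicArc (G : Set ℝ) (k : ℝ) : Prop where
  measurableSet : MeasurableSet G
  add_two_pi_mem : ∀ z, z + 2 * π ∈ G ↔ z ∈ G
  nonneg : 0 ≤ k
  le_two_pi : k ≤ 2 * π
  ae_mem_iff : ∀ᵐ z, z ∈ Ioo (-π) π → (z ∈ G ↔ 2 * |z| < k)

namespace IsPeriodicArc

variable {G A B : Set ℝ} {k : ℝ}

lemma volume_real_inter_preimage_sub (hG : IsPeriodicArc G k) (hA : MeasurableSet A)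
    (hAπ : A ⊆ Ioo (-π) π) (x : ℝ) :
    volume.real (A ∩ (x - ·) ⁻¹' G) = windowMass A k x := by
  have hk := hG.le_two_pi
  have hae : ∀ᵐ y, x - y ∈ Ioo (-π) π → (x - y ∈ G ↔ 2 * |x - y| < k) :=
    (Measure.measurePreserving_sub_left volume x).quasiMeasurePreserving.ae hG.ae_mem_iff
  have hwindow : ∀ᵐ y, y ∈ Ioo (x - π) (x - π + 2 * π) →
      (y ∈ (x - ·) ⁻¹' G ↔ y ∈ Ioo (x - k / 2) (x + k / 2)) := by
    filter_upwards [hae] with y hy hyx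
    rw [mem_preimage, hy ⟨by linarith [hyx.2], by linarith [hyx.1]⟩, ← lt_div_iff₀' two_pos,
      abs_lt, mem_Ioo]
    constructor <;> rintro ⟨h₁, h₂⟩ <;> constructor <;> linarith
  rw [volume_real_inter_eq_integral_periodize hA hAπ (hG.measurableSet.preimage (by fun_prop))
    (fun y => ?_) (x - π)]
  · calc ∫ y in Ioo (x - π) (x - π + 2 * π),
            ((x - ·) ⁻¹' G).indicator (periodize (A.indicator 1)) y
        = ∫ y in Ioo (x - π) (x - π + 2 * π),
            (Ioo (x - k / 2) (x + k / 2)).indicator (periodize (A.indicator 1)) y :=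
          setIntegral_congr_ae measurableSet_Ioo
            (hwindow.mono fun y hy hyx => indicator_eq_indicator (hy hyx) rfl)
      _ = windowMass A k x := by
          rw [setIntegral_indicator measurableSet_Ioo,
            inter_eq_right.2 (Ioo_subset_Ioo (by linarith) (by linarith)), windowMass,
            periodicCDF_sub hA, intervalIntegral.integral_of_le (by linarith [hG.nonneg]),
            integral_Ioc_eq_integral_Ioo]
  · rw [mem_preimage, mem_preimage, ← hG.add_two_pi_mem (x - (y + 2 * π)),
      show x - (y + 2 * π) + 2 * π = x - y by ring]

lemma volume_prod_inter_preimage_sub (hG : IsPeriodicArc G k) (hA : MeasurableSet A)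
    (hAπ : A ⊆ Ioo (-π) π) (hB : MeasurableSet B) (hBπ : B ⊆ Ioo (-π) π) :
    volume (A ×ˢ B ∩ {p : ℝ × ℝ | p.1 - p.2 ∈ G}) =
      ENNReal.ofReal (∫ x in A, windowMass B k x) := by
  have hdiff : MeasurableSet {p : ℝ × ℝ | p.1 - p.2 ∈ G} := measurable_sub hG.measurableSet
  have hslice : ∀ x, volume (Prod.mk x ⁻¹' (A ×ˢ B ∩ {p : ℝ × ℝ | p.1 - p.2 ∈ G})) =
      A.indicator (fun x => ENNReal.ofReal (windowMass B k x)) x := fun x => by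
    by_cases hx : x ∈ A
    · rw [preimage_inter, mk_preimage_prod_right hx, indicator_of_mem hx,
        ← hG.volume_real_inter_preimage_sub hB hBπ, ofReal_measureReal
          (measure_ne_top_of_subset (inter_subset_left.trans hBπ) measure_Ioo_lt_top.ne)]
      rfl
    · rw [preimage_inter, mk_preimage_prod_right_eq_empty hx, empty_inter, measure_empty,
        indicator_of_notMem hx]
  rw [Measure.volume_eq_prod, Measure.prod_apply ((hA.prod hB).inter hdiff), funext hslice,
    lintegral_indicator hA, ofReal_integral_eq_lintegral_ofReal]
  · exact ((continuous_windowMass hB hBπ k).integrableOn_Icc.mono_set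
      (hAπ.trans Ioo_subset_Icc_self))
  · exact ae_of_all _ (windowMass_nonneg hB hBπ hG.nonneg)

lemma volume_prod_le (hG : IsPeriodicArc G k) (hA : MeasurableSet A)
    (hAπ : A ⊆ Ioo (-π) π) (hB : MeasurableSet B) (hBπ : B ⊆ Ioo (-π) π) :
    volume (A ×ˢ B ∩ {p : ℝ × ℝ | p.1 - p.2 ∈ G}) ≤
      volume (symmSet A ×ˢ symmSet B ∩ {p : ℝ × ℝ | p.1 - p.2 ∈ G}) := by
  rw [hG.volume_prod_inter_preimage_sub hA hAπ hB hBπ,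
    hG.volume_prod_inter_preimage_sub (measurableSet_symmSet A) (symmSet_subset hAπ)
      (measurableSet_symmSet B) (symmSet_subset hBπ)]
  exact ENNReal.ofReal_le_ofReal (setIntegral_windowMass_le hAπ hB hBπ hG.nonneg hG.le_two_pi)

lemma volume_prod_Ioo (hG : IsPeriodicArc G k) (hA : MeasurableSet A) (hAπ : A ⊆ Ioo (-π) π) :
    volume (A ×ˢ Ioo (-π) π ∩ {p : ℝ × ℝ | p.1 - p.2 ∈ G}) =
      ENNReal.ofReal (volume.real A * k) := by
  simp only [hG.volume_prod_inter_preimage_sub hA hAπ measurableSet_Ioo Subset.rfl,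
    windowMass_Ioo hG.nonneg hG.le_two_pi, setIntegral_const, smul_eq_mul]

lemma volume_prod_diff (hG : IsPeriodicArc G k) (hA : MeasurableSet A) (hAπ : A ⊆ Ioo (-π) π)
    (hB : MeasurableSet B) (hBπ : B ⊆ Ioo (-π) π) :
    volume (A ×ˢ (Ioo (-π) π \ B) ∩ {p : ℝ × ℝ | p.1 - p.2 ∈ G}) =
      ENNReal.ofReal (volume.real A * k) -
        volume (A ×ˢ B ∩ {p : ℝ × ℝ | p.1 - p.2 ∈ G}) := by
  have hdiff : MeasurableSet {p : ℝ × ℝ | p.1 - p.2 ∈ G} := measurable_sub hG.measurableSet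
  rw [← hG.volume_prod_Ioo hA hAπ, ← measure_sdiff]
  · congr 1
    ext p
    simp only [mem_inter_iff, mem_prod, mem_sdiff]
    tauto
  · exact inter_subset_inter_left _ (prod_mono_right hBπ)
  · exact ((hA.prod hB).inter hdiff).nullMeasurableSet
  · rw [hG.volume_prod_inter_preimage_sub hA hAπ hB hBπ]
    exact ENNReal.ofReal_ne_top

lemma volume_symmSet_prod_diff_le (hG : IsPeriodicArc G k) (hA : MeasurableSet A)
    (hAπ : A ⊆ Ioo (-π) π) (hB : MeasurableSet B) (hBπ : B ⊆ Ioo (-π) π) :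
    volume (symmSet A ×ˢ (Ioo (-π) π \ symmSet B) ∩ {p : ℝ × ℝ | p.1 - p.2 ∈ G}) ≤
      volume (A ×ˢ (Ioo (-π) π \ B) ∩ {p : ℝ × ℝ | p.1 - p.2 ∈ G}) := by
  rw [hG.volume_prod_diff hA hAπ hB hBπ, hG.volume_prod_diff (measurableSet_symmSet A)
    (symmSet_subset hAπ) (measurableSet_symmSet B) (symmSet_subset hBπ), volume_real_symmSet]
  exact tsub_le_tsub_left (hG.volume_prod_le hA hAπ hB hBπ) _

end IsPeriodicArc

lemma symmSet_mono {A B : Set ℝ} (hAB : A ⊆ B) (hB : volume B ≠ ⊤) : symmSet A ⊆ symmSet B :=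
  fun _ hx => mem_symmSet.2 ((mem_symmSet.1 hx).trans_le (measureReal_mono hAB hB))

/-- The part of `(-π, π)` where `u` exceeds the level `s`. -/
def superlevel (u : ℝ → ℝ) (s : ℝ) : Set ℝ := {y | y ∈ Ioo (-π) π ∧ s < u y}

lemma superlevel_subset (u : ℝ → ℝ) (s : ℝ) : superlevel u s ⊆ Ioo (-π) π := fun _ hy => hy.1

lemma superlevel_antitone (u : ℝ → ℝ) : Antitone (superlevel u) := fun _ _ hst _ hy =>
  ⟨hy.1, hst.trans_lt hy.2⟩

lemma volume_superlevel_ne_top (u : ℝ → ℝ) (s : ℝ) : volume (superlevel u s) ≠ ⊤ :=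
  measure_ne_top_of_subset (superlevel_subset u s) measure_Ioo_lt_top.ne

lemma volume_real_superlevel_antitone (u : ℝ → ℝ) :
    Antitone fun s => volume.real (superlevel u s) := fun _ _ hst =>
  measureReal_mono (superlevel_antitone u hst) (volume_superlevel_ne_top u _)

lemma symmSet_superlevel_antitone (u : ℝ → ℝ) : Antitone fun s => symmSet (superlevel u s) :=
  fun _ _ hst => symmSet_mono (superlevel_antitone u hst) (volume_superlevel_ne_top u _)

lemma measurableSet_superlevel {u : ℝ → ℝ} (hu : Measurable u) (s : ℝ) :
    MeasurableSet (superlevel u s) :=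
  measurableSet_Ioo.inter (measurableSet_lt measurable_const hu)

lemma exists_gt_lt_volume_real_superlevel (u : ℝ → ℝ) {s d : ℝ}
    (hd : d < volume.real (superlevel u s)) : ∃ t > s, d < volume.real (superlevel u t) := by
  obtain ⟨r, hr_anti, hr_gt, hr_lim⟩ := exists_seq_strictAnti_tendsto s
  have hunion : ⋃ n, superlevel u (r n) = superlevel u s := by
    refine Subset.antisymm (iUnion_subset fun n => superlevel_antitone u (hr_gt n).le) ?_
    intro y hy
    obtain ⟨n, hn⟩ := (hr_lim.eventually (gt_mem_nhds hy.2)).exists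
    exact mem_iUnion.2 ⟨n, hy.1, hn⟩
  have hlim := tendsto_measure_iUnion_atTop (μ := volume)
    ((superlevel_antitone u).comp hr_anti.antitone)
  simp only [Function.comp_apply] at hlim
  rw [hunion] at hlim
  obtain ⟨n, hn⟩ := (((ENNReal.tendsto_toReal (volume_superlevel_ne_top u s)).comp
    hlim).eventually (lt_mem_nhds hd)).exists
  exact ⟨r n, hr_gt n, hn⟩

lemma exists_volume_real_superlevel_lt {u : ℝ → ℝ} (hu : Measurable u) {d : ℝ} (hd : 0 < d) :
    ∃ s, volume.real (superlevel u s) < d := by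
  have hinter : ⋂ n : ℕ, superlevel u n = ∅ := eq_empty_of_forall_notMem fun y hy => by
    obtain ⟨n, hn⟩ := exists_nat_gt (u y)
    exact hn.not_gt (mem_iInter.1 hy n).2
  have hlim := tendsto_measure_iInter_atTop (μ := volume)
    (fun n : ℕ => (measurableSet_superlevel hu n).nullMeasurableSet)
    ((superlevel_antitone u).comp_monotone Nat.mono_cast) ⟨0, volume_superlevel_ne_top u _⟩
  rw [hinter, measure_empty] at hlim
  obtain ⟨n, hn⟩ := (((ENNReal.tendsto_toReal ENNReal.zero_ne_top).comp hlim).eventually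
    (gt_mem_nhds hd)).exists
  exact ⟨n, hn⟩

lemma symmRearr_eq_volume (u : ℝ → ℝ) (x : ℝ) :
    symmRearr u x = volume.real (Ioi 0 ∩ {t | x ∈ symmSet (superlevel u t)}) := by
  have hmeas : MeasurableSet {t | x ∈ symmSet (superlevel u t)} := by
    simp only [mem_symmSet]
    exact measurableSet_lt measurable_const (volume_real_superlevel_antitone u).measurable
  rw [inter_comm, ← measureReal_restrict_apply hmeas, ← integral_indicator_one hmeas]
  rfl

lemma symmRearr_nonneg (u : ℝ → ℝ) (x : ℝ) : 0 ≤ symmRearr u x := by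
  rw [symmRearr_eq_volume]
  exact measureReal_nonneg

lemma symmRearr_le_of_notMem {u : ℝ → ℝ} {x s : ℝ} (hs : 0 ≤ s)
    (hx : x ∉ symmSet (superlevel u s)) : symmRearr u x ≤ s := by
  have hsub : Ioi 0 ∩ {t | x ∈ symmSet (superlevel u t)} ⊆ Ioc 0 s := fun t ht =>
    ⟨ht.1, le_of_not_ge fun hst => hx (symmSet_superlevel_antitone u hst ht.2)⟩
  rw [symmRearr_eq_volume]
  refine (measureReal_mono hsub measure_Ioc_lt_top.ne).trans_eq ?_
  rw [Real.volume_real_Ioc_of_le hs, sub_zero]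

lemma symmRearr_le {u : ℝ → ℝ} {M : ℝ} (hM : 0 ≤ M) (hu : ∀ x, u x ≤ M) (x : ℝ) :
    symmRearr u x ≤ M := by
  refine symmRearr_le_of_notMem hM ?_
  have hempty : superlevel u M = ∅ :=
    eq_empty_of_forall_notMem fun y hy => (hu y).not_gt hy.2
  simp [mem_symmSet, hempty]

lemma lt_symmRearr_iff {u : ℝ → ℝ} (hu : Measurable u) {x s : ℝ} (hx : x ≠ 0) (hs : 0 ≤ s) :
    s < symmRearr u x ↔ x ∈ symmSet (superlevel u s) := by
  refine ⟨fun h => by_contra fun hx => h.not_ge (symmRearr_le_of_notMem hs hx), fun h => ?_⟩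
  obtain ⟨t, hst, ht⟩ := exists_gt_lt_volume_real_superlevel u (mem_symmSet.1 h)
  obtain ⟨N, hN⟩ := exists_volume_real_superlevel_lt hu (d := 2 * |x|) (by positivity)
  have hlower : Ioc 0 t ⊆ Ioi 0 ∩ {t | x ∈ symmSet (superlevel u t)} := fun r hr =>
    ⟨hr.1, symmSet_superlevel_antitone u hr.2 (mem_symmSet.2 ht)⟩
  have hupper : Ioi 0 ∩ {t | x ∈ symmSet (superlevel u t)} ⊆ Ioc 0 N := fun r hr =>
    ⟨hr.1, le_of_not_ge fun hNr =>
      (mem_symmSet.1 (symmSet_superlevel_antitone u hNr hr.2)).not_gt hN⟩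
  calc s < t := hst
    _ = volume.real (Ioc 0 t) := by rw [Real.volume_real_Ioc_of_le (hs.trans hst.le), sub_zero]
    _ ≤ symmRearr u x := by
      rw [symmRearr_eq_volume]
      exact measureReal_mono hlower (measure_ne_top_of_subset hupper measure_Ioc_lt_top.ne)

lemma measurable_symmRearr (u : ℝ → ℝ) : Measurable (symmRearr u) := by
  have hmeas : MeasurableSet {p : ℝ × ℝ | 2 * |p.1| < volume.real (superlevel u p.2)} :=
    measurableSet_lt (by fun_prop)
      ((volume_real_superlevel_antitone u).measurable.comp measurable_snd)
  have hind : Measurable fun p : ℝ × ℝ =>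
      (symmSet (superlevel u p.2)).indicator (fun _ => (1 : ℝ)) p.1 := by
    convert (measurable_const (a := (1 : ℝ))).indicator hmeas using 2 with p
    exact indicator_eq_indicator mem_symmSet rfl
  exact hind.stronglyMeasurable.integral_prod_right.measurable

lemma superlevel_symmRearr_ae_eq {u : ℝ → ℝ} (hu : Measurable u) {s : ℝ} (hs : 0 ≤ s) :
    superlevel (symmRearr u) s =ᵐ[volume] symmSet (superlevel u s) := by
  filter_upwards [Measure.ae_ne volume 0] with x hx
  refine propext ⟨fun h => (lt_symmRearr_iff hu hx hs).1 h.2, fun h => ?_⟩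
  exact ⟨symmSet_subset (superlevel_subset u s) h, (lt_symmRearr_iff hu hx hs).2 h⟩

lemma nonneg_of_eq_perRearr {g : ℝ → ℝ} (hgsymm : g = perRearr g) (x : ℝ) : 0 ≤ g x := by
  rw [hgsymm]
  exact symmRearr_nonneg _ _

lemma isPeriodicArc_of_eq_perRearr {g : ℝ → ℝ} (hg : Measurable g) (hgsymm : g = perRearr g)
    {r : ℝ} (hr : 0 ≤ r) : IsPeriodicArc {z | r < g z} (volume.real (superlevel g r)) where
  measurableSet := measurableSet_lt measurable_const hg
  add_two_pi_mem z := by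
    have hper : g (z + 2 * π) = g z := by
      rw [hgsymm]
      exact periodize_periodic _ z
    exact iff_of_eq (congrArg (r < ·) hper)
  nonneg := measureReal_nonneg
  le_two_pi := volume_real_le_two_pi (superlevel_subset g r)
  ae_mem_iff := by
    filter_upwards [Measure.ae_ne volume 0] with z hz hzπ
    have hgz : g z = symmRearr g z := (congrFun hgsymm z).trans (periodize_of_mem hzπ)
    rw [← mem_symmSet, ← lt_symmRearr_iff hg hz hr, ← hgz]

lemma symmRearr_mem_of_isUpperSet {u : ℝ → ℝ} (hu : Measurable u) {U : Set ℝ} (hU : IsUpperSet U)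
    {x : ℝ} (hx : x ≠ 0) (hxU : x ∈ symmSet (Ioo (-π) π ∩ u ⁻¹' U)) : symmRearr u x ∈ U := by
  by_contra hnot
  have hsub : Ioo (-π) π ∩ u ⁻¹' U ⊆ superlevel u (symmRearr u x) := fun y hy =>
    ⟨hy.1, lt_of_not_ge fun hle => hnot (hU hle hy.2)⟩
  exact ((lt_symmRearr_iff hu hx (symmRearr_nonneg u x)).2
    (symmSet_mono hsub (volume_superlevel_ne_top u _) hxU)).false

lemma setLIntegral_symmSet_prod_diff_le {g : ℝ → ℝ} (hg : Measurable g) (hgsymm : g = perRearr g)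
    {A B : Set ℝ} (hA : MeasurableSet A) (hAπ : A ⊆ Ioo (-π) π) (hB : MeasurableSet B)
    (hBπ : B ⊆ Ioo (-π) π) :
    ∫⁻ p in symmSet A ×ˢ (Ioo (-π) π \ symmSet B), ENNReal.ofReal (g (p.1 - p.2)) ≤
      ∫⁻ p in A ×ˢ (Ioo (-π) π \ B), ENNReal.ofReal (g (p.1 - p.2)) := by
  have hmeas : Measurable fun p : ℝ × ℝ => g (p.1 - p.2) := hg.comp measurable_sub
  have hlayer : ∀ S : Set (ℝ × ℝ), ∫⁻ p in S, ENNReal.ofReal (g (p.1 - p.2)) =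
      ∫⁻ r in Ioi 0, volume (S ∩ {p | p.1 - p.2 ∈ {z | r < g z}}) := fun S => by
    rw [lintegral_eq_lintegral_meas_lt _ (ae_of_all _ fun _ => nonneg_of_eq_perRearr hgsymm _)
      hmeas.aemeasurable]
    refine lintegral_congr fun r => ?_
    rw [Measure.restrict_apply (measurableSet_lt measurable_const hmeas), inter_comm]
    rfl
  rw [hlayer, hlayer]
  exact setLIntegral_mono' measurableSet_Ioi fun r hr =>
    (isPeriodicArc_of_eq_perRearr hg hgsymm (le_of_lt hr)).volume_symmSet_prod_diff_le hA hAπ hB hBπ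

lemma lintegral_ofReal_mul_eq {α : Type*} [MeasurableSpace α] (μ : Measure α) {f : α → ℝ}
    {w : α → ENNReal} (hf : Measurable f) (hw : Measurable w) :
    ∫⁻ x, ENNReal.ofReal (f x) * w x ∂μ = ∫⁻ r in Ioi (0 : ℝ), ∫⁻ x in {x | r < f x}, w x ∂μ := by
  calc ∫⁻ x, ENNReal.ofReal (f x) * w x ∂μ
      = ∫⁻ x, ENNReal.ofReal (max (f x) 0) ∂μ.withDensity w := by
        rw [lintegral_withDensity_eq_lintegral_mul _ hw (by fun_prop)]
        simp only [Pi.mul_apply, mul_comm, ENNReal.ofReal_max, ENNReal.ofReal_zero,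
          max_eq_left zero_le]
    _ = ∫⁻ r in Ioi (0 : ℝ), μ.withDensity w {x | r < max (f x) 0} :=
        lintegral_eq_lintegral_meas_lt _ (ae_of_all _ fun _ => le_max_right _ _)
          (hf.max measurable_const).aemeasurable
    _ = ∫⁻ r in Ioi (0 : ℝ), ∫⁻ x in {x | r < f x}, w x ∂μ := by
        refine setLIntegral_congr_fun measurableSet_Ioi fun r hr => ?_
        have hset : {x | r < max (f x) 0} = {x | r < f x} := by
          ext x
          exact lt_max_iff.trans (or_iff_left (mem_Ioi.1 hr).not_gt)
        simp only [hset]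
        exact withDensity_apply _ (measurableSet_lt measurable_const hf)

lemma setLIntegral_comp_mul_eq {g u ψ : ℝ → ℝ} (hg : Measurable g) (A : Set ℝ) (hu : Measurable u)
    (hψ : Measurable ψ) :
    ∫⁻ p in A ×ˢ Ioo (-π) π, ENNReal.ofReal (ψ (u p.2)) * ENNReal.ofReal (g (p.1 - p.2)) =
      ∫⁻ r in Ioi (0 : ℝ), ∫⁻ p in A ×ˢ (Ioo (-π) π \ (u ⁻¹' {z | ψ z ≤ r})),
        ENNReal.ofReal (g (p.1 - p.2)) := by
  have hmeas : Measurable fun p : ℝ × ℝ => ψ (u p.2) := hψ.comp (hu.comp measurable_snd)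
  have hkernel : Measurable fun p : ℝ × ℝ => ENNReal.ofReal (g (p.1 - p.2)) :=
    (hg.comp measurable_sub).ennreal_ofReal
  rw [lintegral_ofReal_mul_eq _ hmeas hkernel]
  refine lintegral_congr fun r => ?_
  rw [Measure.restrict_restrict (measurableSet_lt measurable_const hmeas)]
  congr 2
  ext p
  simp only [mem_inter_iff, mem_prod, mem_sdiff, mem_preimage, mem_ofPred_eq, not_le]
  tauto

lemma setLIntegral_antitone_mul_le {g : ℝ → ℝ} (hg : Measurable g) (hgsymm : g = perRearr g)
    {A : Set ℝ} (hA : MeasurableSet A) (hAπ : A ⊆ Ioo (-π) π) {v : ℝ → ℝ} (hv : Measurable v)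
    {ψ : ℝ → ℝ} (hψ : Antitone ψ) :
    ∫⁻ p in symmSet A ×ˢ Ioo (-π) π,
        ENNReal.ofReal (ψ (symmRearr v p.2)) * ENNReal.ofReal (g (p.1 - p.2)) ≤
      ∫⁻ p in A ×ˢ Ioo (-π) π, ENNReal.ofReal (ψ (v p.2)) * ENNReal.ofReal (g (p.1 - p.2)) := by
  rw [setLIntegral_comp_mul_eq hg _ (measurable_symmRearr v) hψ.measurable,
    setLIntegral_comp_mul_eq hg _ hv hψ.measurable]
  refine lintegral_mono fun r => ?_
  let B : Set ℝ := Ioo (-π) π ∩ v ⁻¹' {z | ψ z ≤ r}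
  have hU : IsUpperSet {z | ψ z ≤ r} := fun _ _ hab ha => (hψ hab).trans ha
  have hB : MeasurableSet B :=
    measurableSet_Ioo.inter (hv (measurableSet_le hψ.measurable measurable_const))
  have hstar : symmSet A ×ˢ (Ioo (-π) π \ (symmRearr v ⁻¹' {z | ψ z ≤ r})) ≤ᵐ[volume]
      symmSet A ×ˢ (Ioo (-π) π \ symmSet B) := by
    filter_upwards [Measure.quasiMeasurePreserving_snd.ae (Measure.ae_ne volume 0)] with p hp
    exact fun h => ⟨h.1, h.2.1, fun hpB => h.2.2 (symmRearr_mem_of_isUpperSet hv hU hp hpB)⟩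
  calc ∫⁻ p in symmSet A ×ˢ (Ioo (-π) π \ (symmRearr v ⁻¹' {z | ψ z ≤ r})),
        ENNReal.ofReal (g (p.1 - p.2))
      ≤ ∫⁻ p in symmSet A ×ˢ (Ioo (-π) π \ symmSet B), ENNReal.ofReal (g (p.1 - p.2)) :=
        lintegral_mono_set' hstar
    _ ≤ ∫⁻ p in A ×ˢ (Ioo (-π) π \ B), ENNReal.ofReal (g (p.1 - p.2)) :=
        setLIntegral_symmSet_prod_diff_le hg hgsymm hA hAπ hB inter_subset_left
    _ = ∫⁻ p in A ×ˢ (Ioo (-π) π \ (v ⁻¹' {z | ψ z ≤ r})), ENNReal.ofReal (g (p.1 - p.2)) := by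
        rw [sdiff_self_inter]

lemma monotone_rightDeriv {J : ℝ → ℝ} (hJ : ConvexOn ℝ univ J) :
    Monotone fun x => derivWithin J (Ioi x) x := by
  simpa only [interior_univ, monotoneOn_univ] using hJ.monotoneOn_rightDeriv

lemma integral_rightDeriv {J : ℝ → ℝ} (hJ : ConvexOn ℝ univ J) (a b : ℝ) :
    ∫ x in a..b, derivWithin J (Ioi x) x = J b - J a :=
  intervalIntegral.integral_eq_sub_of_hasDeriv_right
    ((hJ.continuousOn isOpen_univ).mono (subset_univ _))
    (fun x _ => hJ.hasDerivWithinAt_rightDeriv_of_mem_interior (by simp))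
    (monotone_rightDeriv hJ).intervalIntegrable

/-- The right derivative of `s ↦ FM J M s z`. -/
noncomputable def rightDerivFM (J : ℝ → ℝ) (M s z : ℝ) : ℝ :=
  derivWithin J (Ioi (s + (M - z))) (s + (M - z)) - derivWithin J (Ioi s) s

lemma antitone_rightDerivFM {J : ℝ → ℝ} (hJ : ConvexOn ℝ univ J) (M s : ℝ) :
    Antitone (rightDerivFM J M s) := fun _ _ hz =>
  sub_le_sub_right (monotone_rightDeriv hJ (by linarith)) _

lemma rightDerivFM_nonneg {J : ℝ → ℝ} (hJ : ConvexOn ℝ univ J) {M z : ℝ} (hz : z ≤ M) (s : ℝ) :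
    0 ≤ rightDerivFM J M s z :=
  sub_nonneg.2 (monotone_rightDeriv hJ (by linarith))

lemma intervalIntegrable_rightDeriv_add {J : ℝ → ℝ} (hJ : ConvexOn ℝ univ J) (c a b : ℝ) :
    IntervalIntegrable (fun s => derivWithin J (Ioi (s + c)) (s + c)) volume a b :=
  ((monotone_rightDeriv hJ).comp fun _ _ h => add_le_add_left h c).intervalIntegrable

lemma intervalIntegrable_rightDerivFM {J : ℝ → ℝ} (hJ : ConvexOn ℝ univ J) (M z a b : ℝ) :
    IntervalIntegrable (fun s => rightDerivFM J M s z) volume a b :=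
  (intervalIntegrable_rightDeriv_add hJ _ _ _).sub (monotone_rightDeriv hJ).intervalIntegrable

lemma integral_rightDerivFM {J : ℝ → ℝ} (hJ : ConvexOn ℝ univ J) (hJ0 : J 0 = 0) (M a z : ℝ) :
    ∫ s in (0 : ℝ)..a, rightDerivFM J M s z = FM J M a z := by
  unfold rightDerivFM
  rw [intervalIntegral.integral_sub (intervalIntegrable_rightDeriv_add hJ _ _ _)
      (monotone_rightDeriv hJ).intervalIntegrable,
    intervalIntegral.integral_comp_add_right (fun x => derivWithin J (Ioi x) x),
    integral_rightDeriv hJ, integral_rightDeriv hJ, FM, hJ0, zero_add, add_sub_assoc]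
  ring

lemma FM_nonneg {J : ℝ → ℝ} (hJ : ConvexOn ℝ univ J) (hJ0 : J 0 = 0) {M a z : ℝ} (ha : 0 ≤ a)
    (hz : z ≤ M) : 0 ≤ FM J M a z := by
  rw [← integral_rightDerivFM hJ hJ0]
  exact intervalIntegral.integral_nonneg ha fun s _ => rightDerivFM_nonneg hJ hz s

lemma ofReal_FM_eq {J : ℝ → ℝ} (hJ : ConvexOn ℝ univ J) (hJ0 : J 0 = 0) {M a z : ℝ} (ha : 0 ≤ a)
    (hz : z ≤ M) :
    ENNReal.ofReal (FM J M a z) =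
      ∫⁻ s in Ioi 0, (Iio a).indicator (fun s => ENNReal.ofReal (rightDerivFM J M s z)) s := by
  rw [← integral_rightDerivFM hJ hJ0, intervalIntegral.integral_of_le ha,
    integral_Ioc_eq_integral_Ioo, ofReal_integral_eq_lintegral_ofReal,
    setLIntegral_indicator measurableSet_Iio, Iio_inter_Ioi]
  · exact ((intervalIntegrable_iff_integrableOn_Ioo_of_le ha).1
      (intervalIntegrable_rightDerivFM hJ M z 0 a))
  · exact ae_of_all _ (rightDerivFM_nonneg hJ hz)

lemma measurable_rightDerivFM {J : ℝ → ℝ} (hJ : ConvexOn ℝ univ J) (M : ℝ) :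
    Measurable fun p : ℝ × ℝ => rightDerivFM J M p.1 p.2 := by
  have hmeas := (monotone_rightDeriv hJ).measurable
  exact (hmeas.comp (by fun_prop : Measurable fun p : ℝ × ℝ => p.1 + (M - p.2))).sub
    (hmeas.comp measurable_fst)

lemma measurable_indicator_rightDerivFM {J : ℝ → ℝ} (hJ : ConvexOn ℝ univ J) (M : ℝ)
    {g φ v : ℝ → ℝ} (hg : Measurable g) (hφ : Measurable φ) (hv : Measurable v) :
    Measurable fun q : (ℝ × ℝ) × ℝ => (Iio (φ q.1.1)).indicator (fun s =>
      ENNReal.ofReal (rightDerivFM J M s (v q.1.2)) * ENNReal.ofReal (g (q.1.1 - q.1.2))) q.2 := by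
  have hderiv : Measurable fun q : (ℝ × ℝ) × ℝ => rightDerivFM J M q.2 (v q.1.2) :=
    (measurable_rightDerivFM hJ M).comp
      (measurable_snd.prodMk (hv.comp (measurable_snd.comp measurable_fst)))
  have hkernel : Measurable fun q : (ℝ × ℝ) × ℝ => g (q.1.1 - q.1.2) :=
    hg.comp (measurable_sub.comp measurable_fst)
  exact (hderiv.ennreal_ofReal.mul hkernel.ennreal_ofReal).indicator
    (measurableSet_lt measurable_snd (hφ.comp (measurable_fst.comp measurable_fst)))

lemma lintegral_FM_mul_eq {J : ℝ → ℝ} (hJ : ConvexOn ℝ univ J) (hJ0 : J 0 = 0) {M : ℝ}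
    {g φ v : ℝ → ℝ} (hg : Measurable g) (hφ : Measurable φ) (hv : Measurable v)
    (hφ0 : ∀ x, 0 ≤ φ x) (hvM : ∀ x, v x ≤ M) :
    ∫⁻ x in Ioo (-π) π, ∫⁻ y in Ioo (-π) π, ENNReal.ofReal (FM J M (φ x) (v y) * g (x - y)) =
      ∫⁻ s in Ioi 0, ∫⁻ p in superlevel φ s ×ˢ Ioo (-π) π,
        ENNReal.ofReal (rightDerivFM J M s (v p.2)) * ENNReal.ofReal (g (p.1 - p.2)) := by
  let K (p : ℝ × ℝ) (s : ℝ) : ENNReal :=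
    ENNReal.ofReal (rightDerivFM J M s (v p.2)) * ENNReal.ofReal (g (p.1 - p.2))
  have hK : Measurable fun q : (ℝ × ℝ) × ℝ => (Iio (φ q.1.1)).indicator (K q.1) q.2 :=
    measurable_indicator_rightDerivFM hJ M hg hφ hv
  have hlayer : ∀ p : ℝ × ℝ, ENNReal.ofReal (FM J M (φ p.1) (v p.2) * g (p.1 - p.2)) =
      ∫⁻ s in Ioi 0, (Iio (φ p.1)).indicator (K p) s := fun p => by
    rw [ENNReal.ofReal_mul (FM_nonneg hJ hJ0 (hφ0 _) (hvM _)),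
      ofReal_FM_eq hJ hJ0 (hφ0 _) (hvM _), ← lintegral_mul_const' _ _ ENNReal.ofReal_ne_top]
    simp only [K, indicator_mul_const]
  have hslice : ∀ s, ∫⁻ p in Ioo (-π) π ×ˢ Ioo (-π) π, (Iio (φ p.1)).indicator (K p) s =
      ∫⁻ p in superlevel φ s ×ˢ Ioo (-π) π, K p s := fun s => by
    have hset : {p : ℝ × ℝ | s < φ p.1} ∩ Ioo (-π) π ×ˢ Ioo (-π) π =
        superlevel φ s ×ˢ Ioo (-π) π := by
      ext p
      simp only [superlevel, mem_inter_iff, mem_prod, mem_ofPred_eq]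
      tauto
    rw [← hset]
    exact setLIntegral_indicator (measurableSet_lt measurable_const (hφ.comp measurable_fst)) _
  calc ∫⁻ x in Ioo (-π) π, ∫⁻ y in Ioo (-π) π, ENNReal.ofReal (FM J M (φ x) (v y) * g (x - y))
      = ∫⁻ p in Ioo (-π) π ×ˢ Ioo (-π) π, ∫⁻ s in Ioi 0, (Iio (φ p.1)).indicator (K p) s := by
        have hinner : Measurable fun p : ℝ × ℝ => ∫⁻ s in Ioi 0, (Iio (φ p.1)).indicator (K p) s :=
          hK.lintegral_prod_right'
        rw [Measure.volume_eq_prod, setLIntegral_prod _ hinner.aemeasurable]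
        exact lintegral_congr fun x => lintegral_congr fun y => hlayer (x, y)
    _ = ∫⁻ s in Ioi 0, ∫⁻ p in Ioo (-π) π ×ˢ Ioo (-π) π, (Iio (φ p.1)).indicator (K p) s :=
        lintegral_lintegral_swap hK.aemeasurable
    _ = ∫⁻ s in Ioi 0, ∫⁻ p in superlevel φ s ×ˢ Ioo (-π) π, K p s :=
        lintegral_congr hslice

theorem stmt_19_general {J : ℝ → ℝ} (hJ : ConvexOn ℝ univ J) (hJ0 : J 0 = 0) {M : ℝ} (hM : 0 ≤ M)
    {g : ℝ → ℝ} (hg : Measurable g) (hgsymm : g = perRearr g) :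
    (∀ a z : ℝ, 0 ≤ a → z ≤ M → 0 ≤ FM J M a z) ∧
      ∀ φ v : ℝ → ℝ, Measurable φ → Measurable v → (∀ x, 0 ≤ φ x) → (∀ x, v x ≤ M) →
        ∫⁻ x in Ioo (-π) π, ∫⁻ y in Ioo (-π) π,
            ENNReal.ofReal (FM J M (symmRearr φ x) (symmRearr v y) * g (x - y)) ≤
          ∫⁻ x in Ioo (-π) π, ∫⁻ y in Ioo (-π) π,
            ENNReal.ofReal (FM J M (φ x) (v y) * g (x - y)) := by
  refine ⟨fun a z ha hz => FM_nonneg hJ hJ0 ha hz, fun φ v hφ hv hφ0 hvM => ?_⟩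
  rw [lintegral_FM_mul_eq hJ hJ0 hg (measurable_symmRearr φ) (measurable_symmRearr v)
      (symmRearr_nonneg φ) (symmRearr_le hM hvM),
    lintegral_FM_mul_eq hJ hJ0 hg hφ hv hφ0 hvM]
  refine setLIntegral_mono' measurableSet_Ioi fun s hs => ?_
  have hlevel : superlevel (symmRearr φ) s ×ˢ Ioo (-π) π =ᵐ[volume]
      symmSet (superlevel φ s) ×ˢ Ioo (-π) π :=
    Measure.set_prod_ae_eq (superlevel_symmRearr_ae_eq hφ (le_of_lt hs)) .rfl
  rw [setLIntegral_congr hlevel]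
  exact setLIntegral_antitone_mul_le hg hgsymm (measurableSet_superlevel hφ s)
    (superlevel_subset φ s) hv (antitone_rightDerivFM hJ M s)

theorem stmt_19
    (J : ℝ → ℝ) (hJnonneg : ∀ t, 0 ≤ J t) (hJconv : ConvexOn ℝ Set.univ J)
    (hJmono : Monotone J) (hJzero : ∀ t : ℝ, t ≤ 0 → J t = 0)
    (M : ℝ) (hM : 0 < M)
    (g : ℝ → ℝ) (hgmeas : Measurable g) (hgnonneg : ∀ x, 0 ≤ g x)
    (hgper : ∀ x, g (x + 2 * π) = g x) (hgint : IntegrableOn g (Set.Ioo (-π) π))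
    (hgsymm : ∀ x, g x = perRearr g x) :
    (∀ φ₀ v₀ : ℝ, 0 ≤ φ₀ → 0 ≤ v₀ → v₀ ≤ M → 0 ≤ FM J M φ₀ v₀) ∧
    ∀ φ v : ℝ → ℝ, Measurable φ → Measurable v →
      (∀ x, 0 ≤ φ x) → (∀ x, 0 ≤ v x) → (∀ x, v x ≤ M) →
      (∫⁻ x in Set.Ioo (-π) π, ∫⁻ y in Set.Ioo (-π) π,
        ENNReal.ofReal (FM J M (φ x) (v y) * g (x - y))) ≠ ⊤ →
      (∫⁻ x in Set.Ioo (-π) π, ∫⁻ y in Set.Ioo (-π) π,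
        ENNReal.ofReal (FM J M (symmRearr φ x) (symmRearr v y) * g (x - y))) ≤
        ∫⁻ x in Set.Ioo (-π) π, ∫⁻ y in Set.Ioo (-π) π,
          ENNReal.ofReal (FM J M (φ x) (v y) * g (x - y)) := by
  obtain ⟨hnonneg, hle⟩ := stmt_19_general hJconv (hJzero 0 le_rfl) hM.le hgmeas (funext hgsymm)
  exact ⟨fun a z ha _ hz => hnonneg a z ha hz, fun φ v hφ hv hφ0 _ hvM _ => hle φ v hφ hv hφ0 hvM⟩
end
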